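/- arXiv:1201.5328 — 2 statements merged into one kernel-verified Lean document; each statement's English description precedes it below -/
import Mathlib

section
/- Let Ω(t) be a one-parameter family of open bounded sets of ℝ^N smoothly converging as t → 0 to a ball Ω, with |Ω(t)| = |Ω| for all t, with transformations Φ_t whose initial velocity field is orthogonal to ∂Ω, and let λ(t) be the first Dirichlet eigenvalues with jointly smooth eigenfunctions. Then λ'(0) = 0: the ball is a critical point of the first Dirichlet Laplacian eigenvalue among volume-preserving smooth perturbations. -/
open MeasureTheory Metric Set Filter Topology
open scoped RealInnerProductSpace

noncomputable section

abbrev euc (N : ℕ) := EuclideanSpace ℝ (Fin N)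

/-- Bessel function of the first kind of order `ν`, via its power series. -/
def besselJ (ν : ℝ) (x : ℝ) : ℝ :=
  ∑' m : ℕ, ((-1 : ℝ) ^ m / (m.factorial * Real.Gamma (m + ν + 1))) *
    (x / 2) ^ (2 * (m : ℝ) + ν)

/-- First positive zero of the Bessel function `J_ν`. -/
def besselJzero (ν : ℝ) : ℝ := sInf {x : ℝ | 0 < x ∧ besselJ ν x = 0}

/-- Volume of the unit ball of `ℝ^N`. -/
def ballVol (N : ℕ) : ℝ := (volume (ball (0 : euc N) 1)).toReal

/-- Perimeter: `(N-1)`-dimensional Hausdorff measure of the topological boundary. -/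
def perim (N : ℕ) (Ω : Set (euc N)) : ℝ := (μH[(N : ℝ) - 1] (frontier Ω)).toReal

/-- First Dirichlet Laplacian eigenvalue: infimum of Rayleigh quotients over nonzero
smooth functions compactly supported in `Ω`. -/
def firstEigenvalue (N : ℕ) (Ω : Set (euc N)) : ℝ :=
  sInf { R : ℝ | ∃ u : euc N → ℝ, ContDiff ℝ (⊤ : ℕ∞) u ∧ HasCompactSupport u ∧
    tsupport u ⊆ Ω ∧ u ≠ 0 ∧
    R = (∫ x, ‖gradient u x‖ ^ 2) / (∫ x, u x ^ 2) }

/-- Radius of the ball `Ω♯` with the same Lebesgue measure as `Ω`. -/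
def sharpRadius (N : ℕ) (Ω : Set (euc N)) : ℝ :=
  ((volume Ω).toReal / ballVol N) ^ ((1 : ℝ) / N)

/-- Isoperimetric deficit `δP(Ω) = Per(Ω)/Per(Ω♯) - 1`. -/
def perDeficit (N : ℕ) (Ω : Set (euc N)) : ℝ :=
  perim N Ω / perim N (ball (0 : euc N) (sharpRadius N Ω)) - 1

/-- Faber-Krahn deficit `δλ(Ω) = λ(Ω)/λ(Ω♯) - 1`. -/
def fkDeficit (N : ℕ) (Ω : Set (euc N)) : ℝ :=
  firstEigenvalue N Ω / firstEigenvalue N (ball (0 : euc N) (sharpRadius N Ω)) - 1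

/-- A one-parameter family `Ω t` of subsets of `ℝ^N` smoothly converges to `Ω₀` as `t → 0`. -/
structure SmoothlyConverges (N : ℕ) (Ω : ℝ → Set (euc N)) (Ω₀ : Set (euc N)) where
  δ : ℝ
  δ_pos : 0 < δ
  Φ : ℝ → euc N → euc N
  Φinv : ℝ → euc N → euc N
  left_inv : ∀ t ∈ Ico (0 : ℝ) δ, Function.LeftInverse (Φinv t) (Φ t)
  right_inv : ∀ t ∈ Ico (0 : ℝ) δ, Function.RightInverse (Φinv t) (Φ t)
  smooth_x : ∀ t ∈ Ico (0 : ℝ) δ, ContDiff ℝ (⊤ : ℕ∞) (Φ t)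
  smooth_x_inv : ∀ t ∈ Ico (0 : ℝ) δ, ContDiff ℝ (⊤ : ℕ∞) (Φinv t)
  smooth_t : ∀ x, ContDiffOn ℝ (⊤ : ℕ∞) (fun t => Φ t x) (Ico (0 : ℝ) δ)
  smooth_t_inv : ∀ x, ContDiffOn ℝ (⊤ : ℕ∞) (fun t => Φinv t x) (Ico (0 : ℝ) δ)
  init : Ω 0 = Ω₀
  image : ∀ t ∈ Ico (0 : ℝ) δ, Ω t = Φ t '' Ω₀

/-- The Laplacian of `f : ℝ^N → ℝ`, as the trace of the second derivative. -/
def lap (N : ℕ) (f : euc N → ℝ) (x : euc N) : ℝ :=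
  ∑ i : Fin N,
    iteratedFDeriv ℝ 2 f x ![EuclideanSpace.single i 1, EuclideanSpace.single i 1]

/-- The divergence of a vector field on `ℝ^N`. -/
def diver (N : ℕ) (f : euc N → euc N) (x : euc N) : ℝ :=
  ∑ i : Fin N, ⟪fderiv ℝ f x (EuclideanSpace.single i 1), (EuclideanSpace.single i 1 : euc N)⟫

/-- The constant `G_N`: the modulus of the gradient on the boundary of the normalized first
eigenfunction of the unit ball. -/
def GN (N : ℕ) : ℝ :=
  (besselJzero ((N : ℝ) / 2 - 1)) ^ 2 *
      deriv (besselJ ((N : ℝ) / 2 - 1)) (besselJzero ((N : ℝ) / 2 - 1)) /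
    Real.sqrt (N * ballVol N *
      ∫ r in (0 : ℝ)..(besselJzero ((N : ℝ) / 2 - 1)), r * besselJ ((N : ℝ) / 2 - 1) r ^ 2)

/-- The optimal constant `C_N` of the paper. -/
def CN (N : ℕ) : ℝ :=
  (N * (N + 1) *
      ∫ r in (0 : ℝ)..(besselJzero ((N : ℝ) / 2 - 1)), r * besselJ ((N : ℝ) / 2 - 1) r ^ 2) /
    (2 * (besselJzero ((N : ℝ) / 2 - 1) *
        deriv (besselJ ((N : ℝ) / 2 - 1)) (besselJzero ((N : ℝ) / 2 - 1))) ^ 2 *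
      ((besselJzero ((N : ℝ) / 2 - 1)) ^ 2 - N))

end

/-!
Centre the ball at the origin and let `v` be the initial velocity of the eigenfunctions `u t`. By
Hopf's lemma, positive eigenfunctions of the ball are proportional to one another, hence `u 0` is
radial, with a constant normal derivative `-g < 0` on the sphere. To first order `Ω t` is then the
radial subgraph of `R + t v / g`, and preservation of volume means that `v` has mean zero on the
sphere. Testing the equation of `u t` against a truncation `p` of `u 0`, radial and compactly
supported in the ball, shows that the derivative of the eigenvalue is
`-(∫ v (Δp + l p)) / ∫ (u 0) p`. The weight `Δp + l p` is radial and, as the truncation is removed,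
concentrates on the sphere with bounded mass, so the integral against `v` tends to zero.
-/

/-! ### Calculus of the Laplacian -/

section Laplacian

open InnerProductSpace Laplacian
open scoped Gradient

variable {E : Type*} [NormedAddCommGroup E] [InnerProductSpace ℝ E]

theorem contDiff_fderiv_apply {f : E → ℝ} (hf : ContDiff ℝ 2 f) (v : E) :
    ContDiff ℝ 1 (fun y => fderiv ℝ f y v) :=
  (hf.fderiv_right (m := 1) (by norm_num)).clm_apply contDiff_const

theorem contDiff_comp_norm_sub_sq {n : WithTop ℕ∞} {F : ℝ → ℝ} (hF : ContDiff ℝ n F) (a : E) :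
    ContDiff ℝ n (fun y => F (‖y - a‖ ^ 2)) :=
  hF.comp ((contDiff_id.sub contDiff_const).norm_sq ℝ)

theorem fderiv_comp_norm_sub_sq {F : ℝ → ℝ} (hF : Differentiable ℝ F) (a x v : E) :
    fderiv ℝ (fun y => F (‖y - a‖ ^ 2)) x v = 2 * deriv F (‖x - a‖ ^ 2) * ⟪x - a, v⟫ := by
  have hsq : HasFDerivAt (fun y : E => ‖y - a‖ ^ 2) (2 • innerSL ℝ (x - a)) x :=
    HasFDerivAt.comp x (f := fun y => y - a) (hasStrictFDerivAt_norm_sq (x - a)).hasFDerivAt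
      ((hasFDerivAt_id x).sub_const a)
  have hcomp := (hF (‖x - a‖ ^ 2)).hasDerivAt.comp_hasFDerivAt x hsq
  rw [show (fun y => F (‖y - a‖ ^ 2)) = F ∘ fun y => ‖y - a‖ ^ 2 from rfl, hcomp.fderiv]
  simp only [smul_apply, innerSL_apply_apply, smul_eq_mul, nsmul_eq_mul,
    Nat.cast_ofNat]
  ring

theorem gradient_comp_norm_sub_sq [CompleteSpace E] {F : ℝ → ℝ} (hF : Differentiable ℝ F)
    (a x : E) :
    ∇ (fun y => F (‖y - a‖ ^ 2)) x = (2 * deriv F (‖x - a‖ ^ 2)) • (x - a) :=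
  ext_inner_right ℝ fun v => by
    rw [inner_gradient_left, fderiv_comp_norm_sub_sq hF, real_inner_smul_left]

theorem deriv_deriv_nonneg_of_isLocalMin {g : ℝ → ℝ} {a : ℝ} (hg : ContinuousAt g a)
    (hmin : IsLocalMin g a) : 0 ≤ deriv (deriv g) a := by
  by_contra! hneg
  have hmax : IsLocalMax g a := isLocalMax_of_deriv_deriv_neg hneg hmin.deriv_eq_zero hg
  have hconst : g =ᶠ[𝓝 a] fun _ => g a := by
    filter_upwards [hmin, hmax] with t hle hge using le_antisymm hge hle
  have hzero : deriv (deriv g) a = 0 := by simp [hconst.deriv.deriv_eq]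
  exact hneg.ne hzero

theorem fderiv_fderiv_apply_nonneg_of_isLocalMin {f : E → ℝ} (hf : ContDiff ℝ 2 f) {x : E}
    (hmin : IsLocalMin f x) (v : E) : 0 ≤ fderiv ℝ (fun y => fderiv ℝ f y v) x v := by
  have hline (t : ℝ) : HasDerivAt (fun t : ℝ => x + t • v) v t := by
    simpa using ((hasDerivAt_id t).smul_const v).const_add x
  have hderiv (t : ℝ) : HasDerivAt (fun t : ℝ => f (x + t • v)) (fderiv ℝ f (x + t • v) v) t :=
    (hf.differentiable two_ne_zero _).hasFDerivAt.comp_hasDerivAt t (hline t)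
  have hderiv₂ : HasDerivAt (fun t : ℝ => fderiv ℝ f (x + t • v) v)
      (fderiv ℝ (fun y => fderiv ℝ f y v) x v) 0 := by
    have := ((contDiff_fderiv_apply hf v).differentiable one_ne_zero
      (x + (0 : ℝ) • v)).hasFDerivAt.comp_hasDerivAt 0 (hline 0)
    simpa only [Function.comp_def, zero_smul, add_zero] using this
  have hmin_line : IsLocalMin (fun t : ℝ => f (x + t • v)) 0 := by
    have htendsto : Tendsto (fun t : ℝ => x + t • v) (𝓝 0) (𝓝 x) := by
      simpa using (hline 0).continuousAt.tendsto
    filter_upwards [htendsto.eventually hmin] with t ht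
    simpa using ht
  rw [← hderiv₂.deriv, ← funext fun t => (hderiv t).deriv]
  exact deriv_deriv_nonneg_of_isLocalMin (hderiv 0).continuousAt hmin_line

theorem fderiv_fderiv_mul_apply {f g : E → ℝ} (hf : ContDiff ℝ 2 f) (hg : ContDiff ℝ 2 g)
    (x v : E) :
    fderiv ℝ (fun y => fderiv ℝ (fun z => f z * g z) y v) x v =
      f x * fderiv ℝ (fun y => fderiv ℝ g y v) x v +
        g x * fderiv ℝ (fun y => fderiv ℝ f y v) x v +
        2 * (fderiv ℝ f x v * fderiv ℝ g x v) := by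
  have hf' := hf.differentiable two_ne_zero
  have hg' := hg.differentiable two_ne_zero
  have hf'' := (contDiff_fderiv_apply hf v).differentiable one_ne_zero
  have hg'' := (contDiff_fderiv_apply hg v).differentiable one_ne_zero
  have hprod : (fun y => fderiv ℝ (fun z => f z * g z) y v) =
      fun y => f y * fderiv ℝ g y v + g y * fderiv ℝ f y v := by
    ext y
    simp [fderiv_fun_mul (hf' y) (hg' y)]
  rw [hprod, fderiv_fun_add ((hf' x).fun_mul (hg'' x)) ((hg' x).fun_mul (hf'' x)),
    fderiv_fun_mul (hf' x) (hg'' x), fderiv_fun_mul (hg' x) (hf'' x)]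
  simp
  ring

variable [FiniteDimensional ℝ E]

theorem laplacian_eq_sum_fderiv_fderiv {ι : Type*} [Fintype ι] (b : OrthonormalBasis ι ℝ E)
    {f : E → ℝ} (hf : ContDiff ℝ 2 f) (x : E) :
    Δ f x = ∑ i, fderiv ℝ (fun y => fderiv ℝ f y (b i)) x (b i) := by
  rw [laplacian_eq_iteratedFDeriv_orthonormalBasis f b]
  refine Finset.sum_congr rfl fun i _ => ?_
  have hdiff : DifferentiableAt ℝ (fderiv ℝ f) x :=
    (hf.fderiv_right (m := 1) (by norm_num)).differentiable one_ne_zero x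
  rw [iteratedFDeriv_two_apply, fderiv_clm_apply hdiff (by fun_prop)]
  simp

theorem continuous_laplacian {f : E → ℝ} (hf : ContDiff ℝ 2 f) : Continuous (Δ f) := by
  rw [funext (laplacian_eq_sum_fderiv_fderiv (stdOrthonormalBasis ℝ E) hf)]
  exact continuous_finsetSum _ fun i _ =>
    ((contDiff_fderiv_apply hf _).continuous_fderiv one_ne_zero).clm_apply continuous_const

theorem tsupport_laplacian_subset (f : E → ℝ) : tsupport (Δ f) ⊆ tsupport f := by
  refine closure_minimal (fun x hx => ?_) (isClosed_tsupport f)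
  contrapose! hx
  rw [Function.notMem_support,
    (laplacian_congr_nhds (notMem_tsupport_iff_eventuallyEq.1 hx)).eq_of_nhds]
  exact congrFun laplacian_const x

theorem laplacian_comp_add_left (f : E → ℝ) (c x : E) :
    Δ (fun y => f (c + y)) x = Δ f (c + x) := by
  simp [laplacian_eq_iteratedFDeriv_stdOrthonormalBasis, iteratedFDeriv_comp_add_left]

theorem laplacian_comp_linearIsometryEquiv {f : E → ℝ} (hf : ContDiff ℝ 2 f) (A : E ≃ₗᵢ[ℝ] E)
    (x : E) : Δ (fun y => f (A y)) x = Δ f (A x) := by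
  let b := stdOrthonormalBasis ℝ E
  rw [laplacian_eq_iteratedFDeriv_orthonormalBasis f (b.map A),
    laplacian_eq_iteratedFDeriv_orthonormalBasis _ b]
  refine Finset.sum_congr rfl fun i _ => ?_
  have hcomp := (A.toContinuousLinearEquiv : E →L[ℝ] E).iteratedFDeriv_comp_right
    (f := f) hf x (i := 2) le_rfl
  rw [show (fun y => f (A y)) = f ∘ (A.toContinuousLinearEquiv : E →L[ℝ] E) from rfl, hcomp,
    ContinuousMultilinearMap.compContinuousLinearMap_apply]
  congr 1
  ext j
  fin_cases j <;> rfl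

theorem laplacian_sub_const_mul {f g : E → ℝ} (hf : ContDiff ℝ 2 f) (hg : ContDiff ℝ 2 g) (c : ℝ)
    (x : E) : Δ (fun y => f y - c * g y) x = Δ f x - c * Δ g x := by
  have hcg : ContDiff ℝ 2 (c • g) := contDiff_const.smul hg
  rw [show (fun y => f y - c * g y) = f - c • g from rfl,
    hf.contDiffAt.laplacian_sub hcg.contDiffAt,
    laplacian_smul c hg.contDiffAt, smul_eq_mul]

theorem laplacian_nonneg_of_isLocalMin {f : E → ℝ} (hf : ContDiff ℝ 2 f) {x : E}
    (hmin : IsLocalMin f x) : 0 ≤ Δ f x := by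
  rw [laplacian_eq_sum_fderiv_fderiv (stdOrthonormalBasis ℝ E) hf]
  exact Finset.sum_nonneg fun i _ => fderiv_fderiv_apply_nonneg_of_isLocalMin hf hmin _

theorem laplacian_mul {f g : E → ℝ} (hf : ContDiff ℝ 2 f) (hg : ContDiff ℝ 2 g) (x : E) :
    Δ (fun y => f y * g y) x = f x * Δ g x + g x * Δ f x + 2 * ⟪∇ f x, ∇ g x⟫ := by
  let b := stdOrthonormalBasis ℝ E
  have hinner : ⟪∇ f x, ∇ g x⟫ = ∑ i, fderiv ℝ f x (b i) * fderiv ℝ g x (b i) := by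
    rw [← b.sum_inner_mul_inner]
    simp [inner_gradient_left, inner_gradient_right]
  rw [laplacian_eq_sum_fderiv_fderiv b (hf.mul hg), laplacian_eq_sum_fderiv_fderiv b hf,
    laplacian_eq_sum_fderiv_fderiv b hg, hinner, Finset.mul_sum, Finset.mul_sum, Finset.mul_sum,
    ← Finset.sum_add_distrib, ← Finset.sum_add_distrib]
  exact Finset.sum_congr rfl fun i _ => fderiv_fderiv_mul_apply hf hg x (b i)

theorem laplacian_comp_norm_sub_sq {F : ℝ → ℝ} (hF : ContDiff ℝ 2 F) (a x : E) :
    Δ (fun y => F (‖y - a‖ ^ 2)) x =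
      4 * ‖x - a‖ ^ 2 * deriv (deriv F) (‖x - a‖ ^ 2) +
        2 * Module.finrank ℝ E * deriv F (‖x - a‖ ^ 2) := by
  let b := stdOrthonormalBasis ℝ E
  have hF' : ContDiff ℝ 1 (deriv F) := (contDiff_succ_iff_deriv (n := 1).1 hF).2.2
  have hsecond (v : E) : fderiv ℝ (fun y => fderiv ℝ (fun z => F (‖z - a‖ ^ 2)) y v) x v =
      4 * deriv (deriv F) (‖x - a‖ ^ 2) * (⟪x - a, v⟫ * ⟪v, x - a⟫) +
        2 * deriv F (‖x - a‖ ^ 2) * ⟪v, v⟫ := by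
    have hlin : HasFDerivAt (fun y : E => 2 * ⟪y - a, v⟫) (2 • innerSL ℝ v) x := by
      have := ((innerSL ℝ v).hasFDerivAt.comp x ((hasFDerivAt_id x).sub_const a)).const_mul (2 : ℝ)
      simpa [Function.comp_def, real_inner_comm v, two_smul, two_mul] using this
    simp_rw [fderiv_comp_norm_sub_sq (hF.differentiable two_ne_zero), mul_right_comm,
      mul_comm _ (deriv F _)]
    rw [fderiv_fun_mul ((contDiff_comp_norm_sub_sq hF' a).differentiable one_ne_zero x)
      hlin.differentiableAt, hlin.fderiv]
    simp [fderiv_comp_norm_sub_sq (hF'.differentiable one_ne_zero), real_inner_comm v]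
    ring
  rw [laplacian_eq_sum_fderiv_fderiv b (contDiff_comp_norm_sub_sq hF a)]
  simp_rw [hsecond, Finset.sum_add_distrib, ← Finset.mul_sum, b.sum_inner_mul_inner]
  simp
  ring

variable [MeasurableSpace E] [BorelSpace E] (μ : Measure E) [μ.IsAddHaarMeasure]

theorem integral_mul_fderiv_eq_neg_of_hasCompactSupport {f g : E → ℝ} (hf : ContDiff ℝ 1 f)
    (hg : ContDiff ℝ 1 g) (hsupp : HasCompactSupport g) (v : E) :
    ∫ x, f x * fderiv ℝ g x v ∂μ = -∫ x, fderiv ℝ f x v * g x ∂μ := by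
  have hf' := (hf.continuous_fderiv one_ne_zero).clm_apply (continuous_const (y := v))
  have hg' := (hg.continuous_fderiv one_ne_zero).clm_apply (continuous_const (y := v))
  exact integral_mul_fderiv_eq_neg_fderiv_mul_of_integrable
    ((hf'.mul hg.continuous).integrable_of_hasCompactSupport hsupp.mul_left)
    ((hf.continuous.mul hg').integrable_of_hasCompactSupport (hsupp.fderiv_apply ℝ v).mul_left)
    ((hf.continuous.mul hg.continuous).integrable_of_hasCompactSupport hsupp.mul_left)
    (fun x _ => hf.differentiable one_ne_zero x) (fun x _ => hg.differentiable one_ne_zero x)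

theorem integral_mul_fderiv_fderiv_comm {f p : E → ℝ} (hf : ContDiff ℝ 2 f)
    (hp : ContDiff ℝ 2 p) (hsupp : HasCompactSupport p) (v : E) :
    ∫ x, f x * fderiv ℝ (fun y => fderiv ℝ p y v) x v ∂μ =
      ∫ x, fderiv ℝ (fun y => fderiv ℝ f y v) x v * p x ∂μ := by
  rw [integral_mul_fderiv_eq_neg_of_hasCompactSupport μ (hf.of_le one_le_two)
      (contDiff_fderiv_apply hp v) (hsupp.fderiv_apply ℝ v),
    integral_mul_fderiv_eq_neg_of_hasCompactSupport μ (contDiff_fderiv_apply hf v)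
      (hp.of_le one_le_two) hsupp, neg_neg]

theorem integral_mul_laplacian_comm {f p : E → ℝ} (hf : ContDiff ℝ 2 f) (hp : ContDiff ℝ 2 p)
    (hsupp : HasCompactSupport p) :
    ∫ x, f x * Δ p x ∂μ = ∫ x, Δ f x * p x ∂μ := by
  have hcont {g : E → ℝ} (hg : ContDiff ℝ 2 g) (v : E) :
      Continuous fun x => fderiv ℝ (fun y => fderiv ℝ g y v) x v :=
    ((contDiff_fderiv_apply hg v).continuous_fderiv one_ne_zero).clm_apply continuous_const
  simp_rw [laplacian_eq_sum_fderiv_fderiv (stdOrthonormalBasis ℝ E) hf,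
    laplacian_eq_sum_fderiv_fderiv (stdOrthonormalBasis ℝ E) hp, Finset.mul_sum, Finset.sum_mul]
  rw [integral_finsetSum, integral_finsetSum]
  · exact Finset.sum_congr rfl fun i _ => integral_mul_fderiv_fderiv_comm μ hf hp hsupp _
  · exact fun i _ => ((hcont hf _).mul hp.continuous).integrable_of_hasCompactSupport
      hsupp.mul_left
  · exact fun i _ => (hf.continuous.mul (hcont hp _)).integrable_of_hasCompactSupport
      ((hsupp.fderiv_apply ℝ _).fderiv_apply ℝ _).mul_left

end Laplacian

/-! ### The Hopf boundary lemma -/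

section Hopf

open InnerProductSpace Laplacian
open scoped Gradient

variable {E : Type*} [NormedAddCommGroup E]

/-- Hopf's barrier on the ball of radius `R` about the origin. It vanishes on the sphere and, for
large `α`, is strictly subharmonic in the ball away from `x₀`. -/
noncomputable def hopfBarrier (R α : ℝ) (x₀ y : E) : ℝ :=
  (R ^ 2 - ‖y‖ ^ 2) * Real.exp (-α * ‖y - x₀‖ ^ 2)

theorem hopfBarrier_le {R α : ℝ} (hα : 0 ≤ α) (x₀ : E) {x : E} (hx : x ∈ ball (0 : E) R) :
    hopfBarrier R α x₀ x ≤ R ^ 2 := by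
  have hxR : ‖x‖ < R := mem_ball_zero_iff.1 hx
  have hdist : 0 ≤ R ^ 2 - ‖x‖ ^ 2 := by nlinarith [norm_nonneg x]
  have hexp : Real.exp (-α * ‖x - x₀‖ ^ 2) ≤ 1 :=
    Real.exp_le_one_iff.2 (by nlinarith [sq_nonneg ‖x - x₀‖])
  calc hopfBarrier R α x₀ x ≤ R ^ 2 - ‖x‖ ^ 2 := mul_le_of_le_one_right hdist hexp
    _ ≤ R ^ 2 := sub_le_self _ (sq_nonneg _)

theorem le_hopfBarrier {R α : ℝ} (hα : 0 ≤ α) {x₀ x : E} (hx₀ : x₀ ∈ ball (0 : E) R)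
    (hx : x ∈ ball (0 : E) R) :
    Real.exp (-α * (2 * R) ^ 2) * (R ^ 2 - ‖x‖ ^ 2) ≤ hopfBarrier R α x₀ x := by
  rw [mem_ball_zero_iff] at hx₀ hx
  have hdist : 0 ≤ R ^ 2 - ‖x‖ ^ 2 := by nlinarith [norm_nonneg x]
  have hnorm : ‖x - x₀‖ ^ 2 ≤ (2 * R) ^ 2 := by
    gcongr
    linarith [norm_sub_le x x₀]
  rw [mul_comm]
  refine mul_le_mul_of_nonneg_left (Real.exp_le_exp.2 ?_) hdist
  nlinarith

variable [InnerProductSpace ℝ E]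

theorem contDiff_hopfBarrier (R α : ℝ) (x₀ : E) : ContDiff ℝ 2 (hopfBarrier R α x₀) :=
  (contDiff_const.sub (contDiff_id.norm_sq ℝ)).mul
    (contDiff_const.mul ((contDiff_id.sub contDiff_const).norm_sq ℝ)).exp

variable [FiniteDimensional ℝ E]

theorem nonneg_of_laplacian_neg_of_neg {Ω : Set E} (hΩ : IsOpen Ω) (hbdd : Bornology.IsBounded Ω)
    {g : E → ℝ} (hg : ContDiff ℝ 2 g) (hlap : ∀ x ∈ Ω, g x < 0 → Δ g x < 0)
    (hfrontier : ∀ x ∈ frontier Ω, 0 ≤ g x) {x : E} (hx : x ∈ Ω) : 0 ≤ g x := by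
  by_contra! hneg
  obtain ⟨p, hp, hmin⟩ := hbdd.isCompact_closure.exists_isMinOn ⟨x, subset_closure hx⟩
    hg.continuous.continuousOn
  have hgp : g p < 0 := (hmin (subset_closure hx)).trans_lt hneg
  have hpΩ : p ∈ Ω := by
    by_contra hpΩ
    exact hgp.not_ge (hfrontier p ⟨hp, fun hint => hpΩ (interior_subset hint)⟩)
  have hlocal : IsLocalMin g p :=
    hmin.isLocalMin (mem_of_superset (hΩ.mem_nhds hpΩ) subset_closure)
  exact (hlap p hpΩ hgp).not_ge (laplacian_nonneg_of_isLocalMin hg hlocal)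

theorem laplacian_hopfBarrier (R α : ℝ) (x₀ x : E) :
    Δ (hopfBarrier R α x₀) x = Real.exp (-α * ‖x - x₀‖ ^ 2) *
      (-(2 * Module.finrank ℝ E) + 8 * α * ⟪x, x - x₀⟫ +
        (R ^ 2 - ‖x‖ ^ 2) * (4 * α ^ 2 * ‖x - x₀‖ ^ 2 - 2 * α * Module.finrank ℝ E)) := by
  let F : ℝ → ℝ := fun s => R ^ 2 - s
  let G : ℝ → ℝ := fun s => Real.exp (-α * s)
  have hF : ContDiff ℝ 2 F := by fun_prop
  have hG : ContDiff ℝ 2 G := by fun_prop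
  have hF' : deriv F = fun _ => -1 := by ext s; simp [F]
  have hexp (c s : ℝ) : deriv (fun s => c * Real.exp (-α * s)) s =
      c * (-α) * Real.exp (-α * s) := by
    have := (((hasDerivAt_id s).const_mul (-α)).exp.const_mul c).deriv
    simp only [id_eq, mul_one] at this
    rw [this]
    ring
  have hG' : deriv G = fun s => -α * Real.exp (-α * s) := by
    ext s; simpa [G] using hexp 1 s
  have hsplit : hopfBarrier R α x₀ = fun y => F (‖y - 0‖ ^ 2) * G (‖y - x₀‖ ^ 2) := by
    ext y; simp [hopfBarrier, F, G]
  rw [hsplit, laplacian_mul (contDiff_comp_norm_sub_sq hF 0) (contDiff_comp_norm_sub_sq hG x₀),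
    laplacian_comp_norm_sub_sq hF, laplacian_comp_norm_sub_sq hG,
    gradient_comp_norm_sub_sq (hF.differentiable two_ne_zero),
    gradient_comp_norm_sub_sq (hG.differentiable two_ne_zero), real_inner_smul_left,
    real_inner_smul_right, hF', hG', hexp]
  simp only [F, G, sub_zero, deriv_const]
  ring

theorem eventually_laplacian_hopfBarrier_pos_of_le_norm {R r ρ : ℝ} {x₀ : E} (hr : ‖x₀‖ < r)
    (hρ : 0 < ρ) : ∀ᶠ α in atTop, ∀ x : E, r ≤ ‖x‖ → ‖x‖ < R → ρ ≤ ‖x - x₀‖ →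
      0 < Δ (hopfBarrier R α x₀) x := by
  let n : ℝ := Module.finrank ℝ E
  have hx₀ := norm_nonneg x₀
  let κ := r * (r - ‖x₀‖)
  have hκ : 0 < κ := mul_pos (hx₀.trans_lt hr) (by linarith)
  filter_upwards [eventually_ge_atTop 0, eventually_ge_atTop (n / (2 * ρ ^ 2)),
    eventually_gt_atTop (n / (4 * κ))] with α hα hαρ hακ x hrx hxR hxρ
  rw [div_le_iff₀ (by positivity)] at hαρ
  rw [div_lt_iff₀ (by positivity)] at hακ
  rw [laplacian_hopfBarrier]
  refine mul_pos (Real.exp_pos _) ?_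
  have hinner : κ ≤ ⟪x, x - x₀⟫ := calc
    κ ≤ ‖x‖ * (‖x‖ - ‖x₀‖) := mul_le_mul hrx (by linarith) (by linarith) (by linarith)
    _ ≤ ⟪x, x - x₀⟫ := by
      rw [inner_sub_right, real_inner_self_eq_norm_sq]
      linarith [real_inner_le_norm x x₀, sq ‖x‖]
  have hfirst : 8 * α * κ ≤ 8 * α * ⟪x, x - x₀⟫ := by gcongr
  have hquad : 0 ≤ 4 * α ^ 2 * ‖x - x₀‖ ^ 2 - 2 * α * n := by
    have : α * n ≤ α * (α * (2 * ‖x - x₀‖ ^ 2)) := by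
      refine mul_le_mul_of_nonneg_left (hαρ.trans ?_) hα
      gcongr
    linarith
  have hdist : 0 ≤ R ^ 2 - ‖x‖ ^ 2 := by nlinarith [norm_nonneg x]
  linarith [mul_nonneg hdist hquad]

theorem eventually_laplacian_hopfBarrier_pos_of_norm_le {R r ρ : ℝ} {x₀ : E} (hx₀ : ‖x₀‖ ≤ r)
    (hr : r < R) (hρ : 0 < ρ) : ∀ᶠ α in atTop, ∀ x : E, ‖x‖ ≤ r → ρ ≤ ‖x - x₀‖ →
      0 < Δ (hopfBarrier R α x₀) x := by
  let n : ℝ := Module.finrank ℝ E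
  have hr₀ : 0 ≤ r := (norm_nonneg x₀).trans hx₀
  let η := R ^ 2 - r ^ 2
  have hη : 0 < η := sub_pos.2 (by gcongr)
  let K := (4 * r ^ 2 + n + 1) / η
  have hKη : η * K = 4 * r ^ 2 + n + 1 := mul_div_cancel₀ _ hη.ne'
  have : 0 ≤ K := by positivity
  filter_upwards [eventually_ge_atTop 1, eventually_ge_atTop ((n + K) / (2 * ρ ^ 2))]
    with α hα hαρ x hxr hxρ
  rw [div_le_iff₀ (by positivity)] at hαρ
  rw [laplacian_hopfBarrier]
  refine mul_pos (Real.exp_pos _) ?_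
  have hinner : -r ^ 2 ≤ ⟪x, x - x₀⟫ := by
    rw [inner_sub_right, real_inner_self_eq_norm_sq]
    have : ‖x‖ * ‖x₀‖ ≤ r * r := mul_le_mul hxr hx₀ (norm_nonneg x₀) hr₀
    nlinarith [real_inner_le_norm x x₀, sq_nonneg ‖x‖]
  have hfirst : 8 * α * -r ^ 2 ≤ 8 * α * ⟪x, x - x₀⟫ := by gcongr
  have hquad : 2 * α * K ≤ 4 * α ^ 2 * ‖x - x₀‖ ^ 2 - 2 * α * n := by
    have : α * (n + K) ≤ α * (α * (2 * ‖x - x₀‖ ^ 2)) := by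
      refine mul_le_mul_of_nonneg_left (hαρ.trans ?_) (by linarith)
      gcongr
    linarith
  have hdist : η ≤ R ^ 2 - ‖x‖ ^ 2 := sub_le_sub_left (by gcongr) _
  have hsecond : η * (2 * α * K) ≤
      (R ^ 2 - ‖x‖ ^ 2) * (4 * α ^ 2 * ‖x - x₀‖ ^ 2 - 2 * α * n) :=
    mul_le_mul hdist hquad (by positivity) (hη.le.trans hdist)
  have hn : n ≤ α * n := le_mul_of_one_le_left (Nat.cast_nonneg _) hα
  have : η * (2 * α * K) = 2 * α * (4 * r ^ 2 + n + 1) := by rw [← hKη]; ring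
  linarith

theorem exists_laplacian_hopfBarrier_pos {R ρ : ℝ} {x₀ : E} (hx₀ : x₀ ∈ ball (0 : E) R)
    (hρ : 0 < ρ) : ∃ α ≥ 0, ∀ x ∈ ball (0 : E) R, x ∉ ball x₀ ρ →
      0 < Δ (hopfBarrier R α x₀) x := by
  rw [mem_ball_zero_iff] at hx₀
  obtain ⟨r, hx₀r, hrR⟩ := exists_between hx₀
  obtain ⟨α, hα, hnear, hfar⟩ := ((eventually_ge_atTop (0 : ℝ)).and
    ((eventually_laplacian_hopfBarrier_pos_of_le_norm (R := R) hx₀r hρ).and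
      (eventually_laplacian_hopfBarrier_pos_of_norm_le hx₀r.le hrR hρ))).exists
  refine ⟨α, hα, fun x hx hxρ => ?_⟩
  rw [mem_ball_zero_iff] at hx
  rw [mem_ball_iff_norm, not_lt] at hxρ
  rcases le_total r ‖x‖ with hrx | hxr
  exacts [hnear x hrx hx hxρ, hfar x hxr hxρ]

theorem mul_hopfBarrier_le_of_superharmonic {R α ρ ε : ℝ} (hα : 0 ≤ α) (hε : 0 < ε) {x₀ : E}
    (hbarrier : ∀ x ∈ ball (0 : E) R, x ∉ ball x₀ ρ → 0 < Δ (hopfBarrier R α x₀) x)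
    {f : E → ℝ} (hf : ContDiff ℝ 2 f) (hlap : ∀ x ∈ ball (0 : E) R, Δ f x ≤ 0)
    (hnonneg : ∀ x ∈ ball (0 : E) R, 0 ≤ f x) (hlower : ∀ x ∈ ball x₀ ρ, ε * R ^ 2 ≤ f x)
    {x : E} (hx : x ∈ ball (0 : E) R) : ε * hopfBarrier R α x₀ x ≤ f x := by
  have hb : ContDiff ℝ 2 (hopfBarrier R α x₀) := contDiff_hopfBarrier R α x₀
  refine sub_nonneg.1 (nonneg_of_laplacian_neg_of_neg isOpen_ball isBounded_ball
    (hf.sub (contDiff_const.mul hb)) (fun p hp hneg => ?_) (fun p hp => ?_) hx)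
  · have hfar : p ∉ ball x₀ ρ := fun hnear => by
      have : ε * hopfBarrier R α x₀ p ≤ ε * R ^ 2 :=
        mul_le_mul_of_nonneg_left (hopfBarrier_le hα x₀ hp) hε.le
      linarith [hlower p hnear]
    rw [laplacian_sub_const_mul hf hb]
    linarith [hlap p hp, mul_pos hε (hbarrier p hp hfar)]
  · have hfp : 0 ≤ f p := closure_minimal (fun y hy => hnonneg y hy)
      (isClosed_le continuous_const hf.continuous) (frontier_subset_closure hp)
    rw [frontier_ball (0 : E) (pos_of_mem_ball hx).ne', mem_sphere_zero_iff_norm] at hp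
    simpa [hopfBarrier, hp] using hfp

theorem hopf_lemma_ball {R : ℝ} {f : E → ℝ} (hf : ContDiff ℝ 2 f)
    (hlap : ∀ x ∈ ball (0 : E) R, Δ f x ≤ 0) (hnonneg : ∀ x ∈ ball (0 : E) R, 0 ≤ f x)
    {x₀ : E} (hx₀ : x₀ ∈ ball (0 : E) R) (hfx₀ : 0 < f x₀) :
    ∃ k > 0, ∀ x ∈ ball (0 : E) R, k * (R ^ 2 - ‖x‖ ^ 2) ≤ f x := by
  have hR : 0 < R := pos_of_mem_ball hx₀
  obtain ⟨ρ, hρ, hlower⟩ : ∃ ρ > 0, ∀ x ∈ ball x₀ ρ, f x₀ / 2 < f x :=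
    Metric.eventually_nhds_iff_ball.1
      ((hf.continuous.tendsto x₀).eventually (lt_mem_nhds (half_lt_self hfx₀)))
  obtain ⟨α, hα, hbarrier⟩ := exists_laplacian_hopfBarrier_pos hx₀ hρ
  let ε := f x₀ / 2 / R ^ 2
  have hε : 0 < ε := by positivity
  have hεR : ε * R ^ 2 = f x₀ / 2 := div_mul_cancel₀ _ (by positivity)
  refine ⟨ε * Real.exp (-α * (2 * R) ^ 2), by positivity, fun x hx => ?_⟩
  calc ε * Real.exp (-α * (2 * R) ^ 2) * (R ^ 2 - ‖x‖ ^ 2)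
      = ε * (Real.exp (-α * (2 * R) ^ 2) * (R ^ 2 - ‖x‖ ^ 2)) := mul_assoc _ _ _
    _ ≤ ε * hopfBarrier R α x₀ x :=
        mul_le_mul_of_nonneg_left (le_hopfBarrier hα hx₀ hx) hε.le
    _ ≤ f x := mul_hopfBarrier_le_of_superharmonic hα hε hbarrier hf hlap hnonneg
        (fun y hy => hεR.trans_le (hlower y hy).le) hx

end Hopf

/-! ### Positive eigenfunctions on a ball -/

section PositiveEigenfunction

open InnerProductSpace Laplacian

theorem nonneg_of_hasDerivWithinAt_Ici {f : ℝ → ℝ} {f' a : ℝ}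
    (hf : HasDerivWithinAt f f' (Ici a) a) (hle : ∀ᶠ t in 𝓝[>] a, f a ≤ f t) : 0 ≤ f' := by
  have hslope : Tendsto (slope f a) (𝓝[>] a) (𝓝 f') :=
    (hasDerivWithinAt_iff_tendsto_slope' self_notMem_Ioi).1 hf.Ioi_of_Ici
  refine ge_of_tendsto hslope ?_
  filter_upwards [hle, self_mem_nhdsWithin] with t ht hat
  rw [slope_def_field]
  exact div_nonneg (sub_nonneg.2 ht) (sub_nonneg.2 (mem_Ioi.1 hat).le)

variable {E : Type*} [NormedAddCommGroup E]

theorem hasDerivAt_comp_smul [NormedSpace ℝ E] {u : E → ℝ} (hu : Differentiable ℝ u) (w : E)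
    (r : ℝ) : HasDerivAt (fun s : ℝ => u (s • w)) (fderiv ℝ u (r • w) w) r := by
  have hray : HasDerivAt (fun s : ℝ => s • w) w r := by
    simpa using (hasDerivAt_id r).smul_const w
  exact (hu _).hasFDerivAt.comp_hasDerivAt r hray

theorem norm_smul_of_norm_eq_one [NormedSpace ℝ E] {w : E} (hw : ‖w‖ = 1) {r : ℝ} (hr : 0 ≤ r) :
    ‖r • w‖ = r := by
  rw [norm_smul, hw, mul_one, Real.norm_of_nonneg hr]

theorem exists_norm_eq_one_smul_eq [NormedSpace ℝ E] [Nontrivial E] (x : E) :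
    ∃ w : E, ‖w‖ = 1 ∧ ‖x‖ • w = x := by
  rcases eq_or_ne x 0 with rfl | hx
  · obtain ⟨w, hw⟩ := exists_norm_eq E zero_le_one
    exact ⟨w, hw, by simp⟩
  · exact ⟨‖x‖⁻¹ • x, norm_smul_inv_norm hx, smul_inv_smul₀ (norm_ne_zero_iff.2 hx) x⟩

variable [InnerProductSpace ℝ E] [FiniteDimensional ℝ E]

theorem exists_abs_le_mul_of_eq_zero_on_sphere [Nontrivial E] {R : ℝ} (hR : 0 < R) {f : E → ℝ}
    (hf : ContDiff ℝ 1 f) (hzero : ∀ x ∈ sphere (0 : E) R, f x = 0) :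
    ∃ C > 0, ∀ x ∈ ball (0 : E) R, |f x| ≤ C * (R ^ 2 - ‖x‖ ^ 2) := by
  obtain ⟨L, hL⟩ := (isCompact_closedBall (0 : E) R).exists_bound_of_continuousOn
    (hf.continuous_fderiv one_ne_zero).continuousOn
  have hL₀ : 0 ≤ L := (norm_nonneg _).trans (hL 0 (mem_closedBall_self hR.le))
  refine ⟨L / R + 1, by positivity, fun x hx => ?_⟩
  obtain ⟨w, hw, hxw⟩ := exists_norm_eq_one_smul_eq x
  have hxR : ‖x‖ < R := mem_ball_zero_iff.1 hx
  have hy : R • w ∈ sphere (0 : E) R :=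
    mem_sphere_zero_iff_norm.2 (norm_smul_of_norm_eq_one hw hR.le)
  have hdist : ‖x - R • w‖ = R - ‖x‖ := by
    rw [norm_sub_rev]
    nth_rw 1 [← hxw]
    rw [← sub_smul, norm_smul_of_norm_eq_one hw (sub_nonneg.2 hxR.le)]
  have hlip : |f x| ≤ L * (R - ‖x‖) := by
    have := (convex_closedBall (0 : E) R).norm_image_sub_le_of_norm_fderiv_le
      (fun z _ => hf.differentiable one_ne_zero z) hL (sphere_subset_closedBall hy)
      (ball_subset_closedBall hx)
    rwa [hzero _ hy, sub_zero, hdist] at this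
  have : 0 ≤ R - ‖x‖ := sub_nonneg.2 hxR.le
  have hx₀ := norm_nonneg x
  calc |f x| ≤ L * (R - ‖x‖) := hlip
    _ = L / R * ((R - ‖x‖) * R) := by field_simp
    _ ≤ (L / R + 1) * ((R - ‖x‖) * (R + ‖x‖)) := by
        gcongr <;> linarith
    _ = (L / R + 1) * (R ^ 2 - ‖x‖ ^ 2) := by ring

theorem exists_mul_abs_le_of_superharmonic [Nontrivial E] {R : ℝ} {f w : E → ℝ}
    (hf : ContDiff ℝ 2 f) (hlap : ∀ x ∈ ball (0 : E) R, Δ f x ≤ 0)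
    (hnonneg : ∀ x ∈ ball (0 : E) R, 0 ≤ f x) {x₀ : E} (hx₀ : x₀ ∈ ball (0 : E) R)
    (hfx₀ : 0 < f x₀) (hw : ContDiff ℝ 1 w) (hzero : ∀ x ∈ sphere (0 : E) R, w x = 0) :
    ∃ k > 0, ∀ x ∈ ball (0 : E) R, k * |w x| ≤ f x := by
  obtain ⟨ε, hε, hlower⟩ := hopf_lemma_ball hf hlap hnonneg hx₀ hfx₀
  obtain ⟨C, hC, hupper⟩ := exists_abs_le_mul_of_eq_zero_on_sphere (pos_of_mem_ball hx₀) hw hzero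
  refine ⟨ε / C, by positivity, fun x hx => ?_⟩
  calc ε / C * |w x| ≤ ε / C * (C * (R ^ 2 - ‖x‖ ^ 2)) := by gcongr; exact hupper x hx
    _ = ε * (R ^ 2 - ‖x‖ ^ 2) := by field_simp
    _ ≤ f x := hlower x hx

/-- A positive Dirichlet eigenfunction `u` of `-Δ` on `Ω`, with eigenvalue `l`. As in the classical
setting of Hadamard's formula, `u` is the restriction of a `C²` function on the whole space, whose
values outside `closure Ω` carry no information. -/
structure IsPositiveEigenfunction (Ω : Set E) (l : ℝ) (u : E → ℝ) : Prop where
  contDiff : ContDiff ℝ 2 u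
  pos : ∀ x ∈ Ω, 0 < u x
  eq_zero : ∀ x ∈ frontier Ω, u x = 0
  laplacian_eq : ∀ x ∈ Ω, Δ u x = -(l * u x)

namespace IsPositiveEigenfunction

theorem comp_add_left {Ω : Set E} {l : ℝ} {u : E → ℝ} (hu : IsPositiveEigenfunction Ω l u)
    (c : E) : IsPositiveEigenfunction ((c + ·) ⁻¹' Ω) l (fun x => u (c + x)) where
  contDiff := hu.contDiff.comp (contDiff_const.add contDiff_id)
  pos x hx := hu.pos _ hx
  eq_zero x hx := by
    have hfrontier := (Homeomorph.addLeft c).preimage_frontier Ω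
    exact hu.eq_zero _ (hfrontier.ge hx)
  laplacian_eq x hx := (laplacian_comp_add_left u c x).trans (hu.laplacian_eq _ hx)

theorem eigenvalue_nonneg {Ω : Set E} {l : ℝ} {u : E → ℝ} (hu : IsPositiveEigenfunction Ω l u)
    (hΩ : IsOpen Ω) (hbdd : Bornology.IsBounded Ω) (hne : Ω.Nonempty) : 0 ≤ l := by
  by_contra! hl
  obtain ⟨x, hx⟩ := hne
  have : 0 ≤ -u x := nonneg_of_laplacian_neg_of_neg hΩ hbdd hu.contDiff.neg
    (fun p hp _ => by
      rw [show (fun y => -u y) = -u from rfl, laplacian_neg, Pi.neg_apply, hu.laplacian_eq p hp,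
        neg_neg]
      exact mul_neg_of_neg_of_pos hl (hu.pos p hp))
    (fun p hp => by rw [hu.eq_zero p hp, neg_zero]) hx
  linarith [hu.pos x hx]

variable {R l : ℝ} {u : E → ℝ}

theorem eq_zero_of_mem_sphere (hu : IsPositiveEigenfunction (ball (0 : E) R) l u) (hR : 0 < R)
    {x : E} (hx : x ∈ sphere (0 : E) R) : u x = 0 :=
  hu.eq_zero x (by rwa [frontier_ball (0 : E) hR.ne'])

theorem eigenvalue_ball_nonneg (hu : IsPositiveEigenfunction (ball (0 : E) R) l u) (hR : 0 < R) :
    0 ≤ l :=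
  hu.eigenvalue_nonneg isOpen_ball isBounded_ball ⟨0, mem_ball_self hR⟩

theorem laplacian_nonpos (hu : IsPositiveEigenfunction (ball (0 : E) R) l u) (hR : 0 < R)
    {x : E} (hx : x ∈ ball (0 : E) R) : Δ u x ≤ 0 := by
  rw [hu.laplacian_eq x hx, neg_nonpos]
  exact mul_nonneg (hu.eigenvalue_ball_nonneg hR) (hu.pos x hx).le

theorem exists_isGreatest_mul_le [Nontrivial E]
    (hu : IsPositiveEigenfunction (ball (0 : E) R) l u) (hR : 0 < R) {w : E → ℝ}
    (hw : ContDiff ℝ 1 w) (hzero : ∀ x ∈ sphere (0 : E) R, w x = 0) :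
    ∃ s, IsGreatest {s : ℝ | ∀ x ∈ ball (0 : E) R, s * u x ≤ w x} s := by
  have hcenter : (0 : E) ∈ ball (0 : E) R := mem_ball_self hR
  set S : Set ℝ := {s | ∀ x ∈ ball (0 : E) R, s * u x ≤ w x} with hS
  have hS_nonempty : S.Nonempty := by
    obtain ⟨k, hk, hkw⟩ := exists_mul_abs_le_of_superharmonic hu.contDiff
      (fun x => hu.laplacian_nonpos hR) (fun x hx => (hu.pos x hx).le) hcenter
      (hu.pos 0 hcenter) hw hzero
    refine ⟨-k⁻¹, fun x hx => ?_⟩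
    have := mul_le_mul_of_nonneg_left (hkw x hx) (inv_pos.2 hk).le
    rw [inv_mul_cancel_left₀ hk.ne'] at this
    linarith [neg_abs_le (w x)]
  have hS_bdd : BddAbove S :=
    ⟨w 0 / u 0, fun s hs => (le_div_iff₀ (hu.pos 0 hcenter)).2 (hs 0 hcenter)⟩
  have hS_closed : IsClosed S := by
    simp only [hS, ofPred_forall]
    exact isClosed_biInter fun x _ => isClosed_le (by fun_prop) continuous_const
  exact ⟨sSup S, hS_closed.csSup_mem hS_nonempty hS_bdd, fun s => le_csSup hS_bdd⟩

-- If `s` is the largest number with `s u ≤ w` and `w - s u` is not identically zero, then Hopf's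
-- lemma makes `w - s u` dominate a positive multiple of `u`, contradicting the choice of `s`.
theorem exists_eq_mul_of_laplacian_eq [Nontrivial E]
    (hu : IsPositiveEigenfunction (ball (0 : E) R) l u) (hR : 0 < R) {w : E → ℝ}
    (hw : ContDiff ℝ 2 w) (hzero : ∀ x ∈ sphere (0 : E) R, w x = 0)
    (hlap : ∀ x ∈ ball (0 : E) R, Δ w x = -(l * w x)) :
    ∃ s : ℝ, ∀ x ∈ ball (0 : E) R, w x = s * u x := by
  obtain ⟨s, hle, hgreatest⟩ := hu.exists_isGreatest_mul_le hR (hw.of_le one_le_two) hzero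
  refine ⟨s, ?_⟩
  by_contra! hne
  obtain ⟨x₀, hx₀, hne⟩ := hne
  have hnonneg : ∀ x ∈ ball (0 : E) R, 0 ≤ w x - s * u x := fun x hx => sub_nonneg.2 (hle x hx)
  have hsuper : ∀ x ∈ ball (0 : E) R, Δ (fun z => w z - s * u z) x ≤ 0 := fun x hx => by
    rw [laplacian_sub_const_mul hw hu.contDiff, hlap x hx, hu.laplacian_eq x hx]
    linarith [mul_nonneg (hu.eigenvalue_ball_nonneg hR) (hnonneg x hx)]
  obtain ⟨k, hk, hku⟩ := exists_mul_abs_le_of_superharmonic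
    (hw.sub (contDiff_const.mul hu.contDiff)) hsuper hnonneg hx₀
    ((hnonneg x₀ hx₀).lt_of_ne (sub_ne_zero.2 hne).symm) (hu.contDiff.of_le one_le_two)
    (fun x => hu.eq_zero_of_mem_sphere hR)
  have hlarger : s + k ≤ s := hgreatest fun x hx => by
    have := hku x hx
    rw [abs_of_pos (hu.pos x hx)] at this
    linarith
  linarith

theorem apply_linearIsometryEquiv [Nontrivial E]
    (hu : IsPositiveEigenfunction (ball (0 : E) R) l u) (hR : 0 < R) (A : E ≃ₗᵢ[ℝ] E) {x : E}
    (hx : x ∈ ball (0 : E) R) : u (A x) = u x := by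
  obtain ⟨s, hs⟩ := hu.exists_eq_mul_of_laplacian_eq hR (w := fun z => u (A z))
    (hu.contDiff.comp A.contDiff)
    (fun z hz => hu.eq_zero_of_mem_sphere hR (by simpa using hz))
    (fun z hz => by
      rw [laplacian_comp_linearIsometryEquiv hu.contDiff A]
      exact hu.laplacian_eq _ (by simpa using hz))
  have hcenter : (0 : E) ∈ ball (0 : E) R := mem_ball_self hR
  have hs_one : s = 1 := by
    have := hs 0 hcenter
    rw [map_zero] at this
    exact (mul_eq_right₀ (hu.pos 0 hcenter).ne').1 this.symm
  rw [hs x hx, hs_one, one_mul]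

theorem eq_of_norm_eq [Nontrivial E] (hu : IsPositiveEigenfunction (ball (0 : E) R) l u)
    (hR : 0 < R) {x y : E} (hxy : ‖x‖ = ‖y‖) (hx : x ∈ closedBall (0 : E) R) : u x = u y := by
  rcases (mem_closedBall_zero_iff.1 hx).lt_or_eq with hlt | heq
  · rw [← Submodule.reflection_sub hxy]
    exact (hu.apply_linearIsometryEquiv hR _ (mem_ball_zero_iff.2 hlt)).symm
  · rw [hu.eq_zero_of_mem_sphere hR (mem_sphere_zero_iff_norm.2 heq),
      hu.eq_zero_of_mem_sphere hR (mem_sphere_zero_iff_norm.2 (hxy ▸ heq))]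

theorem fderiv_sphere_neg [Nontrivial E] (hu : IsPositiveEigenfunction (ball (0 : E) R) l u)
    (hR : 0 < R) {w : E} (hw : ‖w‖ = 1) : fderiv ℝ u (R • w) w < 0 := by
  obtain ⟨k, hk, hlower⟩ := hopf_lemma_ball hu.contDiff (fun x => hu.laplacian_nonpos hR)
    (fun x hx => (hu.pos x hx).le) (mem_ball_self hR) (hu.pos 0 (mem_ball_self hR))
  let h : ℝ → ℝ := fun s => u ((R - s) • w) - k * (R ^ 2 - (R - s) ^ 2)
  have hderiv : HasDerivAt h (-fderiv ℝ u (R • w) w - k * (2 * R)) 0 := by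
    have hpoly : HasDerivAt (fun r : ℝ => k * (R ^ 2 - r ^ 2)) (k * -(2 * R)) R := by
      simpa using ((hasDerivAt_pow 2 R).const_sub (R ^ 2)).const_mul k
    have hray := (hasDerivAt_comp_smul (hu.contDiff.differentiable two_ne_zero) w R).sub hpoly
    have hreflect := HasDerivAt.comp_const_sub R 0
      (f' := fderiv ℝ u (R • w) w - k * -(2 * R)) (by rwa [sub_zero])
    rw [show -fderiv ℝ u (R • w) w - k * (2 * R) = -(fderiv ℝ u (R • w) w - k * -(2 * R)) by ring]
    exact hreflect
  have hmin : ∀ᶠ s in 𝓝[>] (0 : ℝ), h 0 ≤ h s := by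
    filter_upwards [Ioo_mem_nhdsGT hR] with s hs
    have hnorm : ‖(R - s) • w‖ = R - s := norm_smul_of_norm_eq_one hw (by linarith [hs.2])
    have hmem : (R - s) • w ∈ ball (0 : E) R := by
      rw [mem_ball_zero_iff, hnorm]
      linarith [hs.1]
    have hzero : u (R • w) = 0 := hu.eq_zero_of_mem_sphere hR
      (mem_sphere_zero_iff_norm.2 (norm_smul_of_norm_eq_one hw hR.le))
    have := hlower _ hmem
    rw [hnorm] at this
    simpa [h, hzero] using this
  linarith [nonneg_of_hasDerivWithinAt_Ici hderiv.hasDerivWithinAt hmin, mul_pos hk hR]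

theorem fderiv_sphere_eq [Nontrivial E] (hu : IsPositiveEigenfunction (ball (0 : E) R) l u)
    (hR : 0 < R) {w w' : E} (hw : ‖w‖ = 1) (hw' : ‖w'‖ = 1) :
    fderiv ℝ u (R • w) w = fderiv ℝ u (R • w') w' := by
  have hdiff := hu.contDiff.differentiable two_ne_zero
  have hderiv : HasDerivWithinAt (fun s : ℝ => u (s • w)) (fderiv ℝ u (R • w') w') (Icc 0 R) R := by
    refine (hasDerivAt_comp_smul hdiff w' R).hasDerivWithinAt.congr_of_mem (fun s hs => ?_)
      (right_mem_Icc.2 hR.le)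
    refine hu.eq_of_norm_eq hR (by rw [norm_smul, norm_smul, hw, hw']) ?_
    rw [mem_closedBall_zero_iff, norm_smul_of_norm_eq_one hw hs.1]
    exact hs.2
  exact (uniqueDiffOn_Icc hR R (right_mem_Icc.2 hR.le)).eq_deriv _
    (hasDerivAt_comp_smul hdiff w R).hasDerivWithinAt hderiv

theorem exists_fderiv_sphere_eq_neg [Nontrivial E]
    (hu : IsPositiveEigenfunction (ball (0 : E) R) l u) (hR : 0 < R) :
    ∃ g > 0, ∀ w : E, ‖w‖ = 1 → fderiv ℝ u (R • w) w = -g := by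
  obtain ⟨w₀, hw₀⟩ := exists_norm_eq E zero_le_one
  exact ⟨-fderiv ℝ u (R • w₀) w₀, neg_pos.2 (hu.fderiv_sphere_neg hR hw₀),
    fun w hw => by rw [neg_neg, hu.fderiv_sphere_eq hR hw hw₀]⟩

end IsPositiveEigenfunction

end PositiveEigenfunction

/-! ### First-order expansions -/

section Expansion

theorem eventually_norm_sub_sub_smul_le {X F : Type*} [TopologicalSpace X] [NormedAddCommGroup F]
    [NormedSpace ℝ F] {f f' : ℝ → X → F} {S : Set ℝ} {K : Set X} {a : ℝ} (hS : Convex ℝ S)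
    (ha : a ∈ S) (hK : IsCompact K)
    (hf : ∀ x ∈ K, ∀ s ∈ S, HasDerivWithinAt (fun s => f s x) (f' s x) S s)
    (hf' : ContinuousOn (Function.uncurry f') (S ×ˢ K)) {ε : ℝ} (hε : 0 < ε) :
    ∀ᶠ s in 𝓝[S] a, ∀ x ∈ K, ‖f s x - f a x - (s - a) • f' a x‖ ≤ ε * ‖s - a‖ := by
  obtain ⟨V, hV, hclose⟩ := hK.mem_uniformity_of_prod hf' ha (dist_mem_uniformity hε)
  obtain ⟨η, hη, hηV⟩ := Metric.mem_nhdsWithin_iff.1 hV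
  filter_upwards [inter_mem_nhdsWithin S (ball_mem_nhds a hη)] with s ⟨hsS, hsη⟩ x hx
  have hderiv : ∀ τ ∈ ball a η ∩ S, HasDerivWithinAt (fun s => f s x - (s - a) • f' a x)
      (f' τ x - f' a x) (ball a η ∩ S) τ := fun τ hτ => by
    have hlin : HasDerivWithinAt (fun s => (s - a) • f' a x) (f' a x) (ball a η ∩ S) τ := by
      simpa using (((hasDerivAt_id τ).sub_const a).smul_const (f' a x)).hasDerivWithinAt
    exact ((hf x hx τ hτ.2).mono inter_subset_right).sub hlin
  have hbound : ∀ τ ∈ ball a η ∩ S, ‖f' τ x - f' a x‖ ≤ ε := fun τ hτ => by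
    rw [← dist_eq_norm]
    exact (hclose τ (hηV hτ) x hx).le
  have := ((convex_ball a η).inter hS).norm_image_sub_le_of_norm_hasDerivWithin_le hderiv hbound
    ⟨mem_ball_self hη, ha⟩ ⟨hsη, hsS⟩
  simpa [sub_right_comm] using this

/-- `u t = u 0 + t v + o(t)` as `t → 0⁺`, uniformly on compact sets. -/
def HasInitialVelocity {X : Type*} [TopologicalSpace X] (u : ℝ → X → ℝ) (v : X → ℝ) : Prop :=
  ∀ K : Set X, IsCompact K → ∀ ε > 0,
    ∀ᶠ t in 𝓝[>] (0 : ℝ), ∀ x ∈ K, |u t x - u 0 x - t * v x| ≤ ε * t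

theorem eventually_mul_lt_nhdsGT_zero (C : ℝ) {ε : ℝ} (hε : 0 < ε) :
    ∀ᶠ t in 𝓝[>] (0 : ℝ), t * C < ε := by
  have : Tendsto (fun t : ℝ => t * C) (𝓝[>] 0) (𝓝 0) := by
    simpa using (continuous_mul_const C).continuousWithinAt (s := Ioi 0) (x := 0) |>.tendsto
  exact this.eventually_lt_const hε

theorem HasInitialVelocity.eventually_pos_of_isCompact {X : Type*} [TopologicalSpace X]
    {u : ℝ → X → ℝ} {v : X → ℝ} (huv : HasInitialVelocity u v) (hv : Continuous v)
    (hu₀ : Continuous (u 0)) {K : Set X} (hK : IsCompact K) (hpos : ∀ x ∈ K, 0 < u 0 x) :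
    ∀ᶠ t in 𝓝[>] (0 : ℝ), ∀ x ∈ K, 0 < u t x := by
  rcases K.eq_empty_or_nonempty with rfl | hne
  · simp
  obtain ⟨p, hpK, hp⟩ := hK.exists_isMinOn hne hu₀.continuousOn
  obtain ⟨M, hM⟩ := hK.exists_bound_of_continuousOn hv.continuousOn
  filter_upwards [huv K hK 1 one_pos, eventually_mul_lt_nhdsGT_zero (M + 1) (hpos p hpK),
    self_mem_nhdsWithin] with t hexp hsmall ht x hx
  have hvx : -M ≤ v x := (abs_le.1 (hM x hx)).1
  have hmin : u 0 p ≤ u 0 x := hp hx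
  have := mul_le_mul_of_nonneg_left hvx (mem_Ioi.1 ht).le
  linarith [(abs_le.1 (hexp x hx)).1]

variable {E : Type*} [NormedAddCommGroup E] [NormedSpace ℝ E]

theorem exists_continuous_hasInitialVelocity {u : ℝ → E → ℝ} {δ : ℝ} (hδ : 0 < δ)
    (hu : ContDiffOn ℝ 1 (fun p : ℝ × E => u p.1 p.2) (Ico 0 δ ×ˢ univ)) :
    ∃ v : E → ℝ, Continuous v ∧ HasInitialVelocity u v := by
  have hunique : UniqueDiffOn ℝ (Ico 0 δ ×ˢ (univ : Set E)) :=
    (uniqueDiffOn_Ico 0 δ).prod uniqueDiffOn_univ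
  let u' : ℝ → E → ℝ := fun t x =>
    fderivWithin ℝ (fun p : ℝ × E => u p.1 p.2) (Ico 0 δ ×ˢ univ) (t, x) (1, 0)
  have hcont : ContinuousOn (Function.uncurry u') (Ico 0 δ ×ˢ univ) :=
    (hu.continuousOn_fderivWithin hunique le_rfl).clm_apply continuousOn_const
  have hderiv : ∀ x, ∀ t ∈ Ico 0 δ, HasDerivWithinAt (fun t => u t x) (u' t x) (Ico 0 δ) t :=
    fun x t ht =>
      (hu.differentiableOn one_ne_zero (t, x) ⟨ht, mem_univ x⟩).hasFDerivWithinAt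
        |>.comp_hasDerivWithinAt (f := fun s => (s, x)) t
          ((hasDerivAt_id t).prodMk (hasDerivAt_const t x)).hasDerivWithinAt
          fun s hs => ⟨hs, mem_univ x⟩
  refine ⟨u' 0, ?_, fun K hK ε hε => ?_⟩
  · exact hcont.comp_continuous (Continuous.prodMk_right (0 : ℝ))
      fun x => ⟨left_mem_Ico.2 hδ, mem_univ x⟩
  · have hexp := eventually_norm_sub_sub_smul_le (convex_Ico 0 δ) (left_mem_Ico.2 hδ) hK
      (fun x _ => hderiv x) (hcont.mono (prod_mono_right (subset_univ K))) hε
    rw [nhdsWithin_Ico_eq_nhdsGE hδ] at hexp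
    filter_upwards [hexp.filter_mono (nhdsWithin_mono _ Ioi_subset_Ici_self), self_mem_nhdsWithin]
      with t ht ht₀ x hx
    simpa [abs_of_pos (mem_Ioi.1 ht₀)] using ht x hx

variable [FiniteDimensional ℝ E]

theorem eventually_abs_add_mul_sub_le {u : E → ℝ} {R g : ℝ} (hu : ContDiff ℝ 1 u)
    (hzero : ∀ w : E, ‖w‖ = 1 → u (R • w) = 0)
    (hg : ∀ w : E, ‖w‖ = 1 → fderiv ℝ u (R • w) w = -g) {κ : ℝ} (hκ : 0 < κ) :
    ∀ᶠ r in 𝓝 R, ∀ w : E, ‖w‖ = 1 → |u (r • w) + g * (r - R)| ≤ κ * |r - R| := by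
  have hcont : Continuous (Function.uncurry fun (r : ℝ) (w : E) => fderiv ℝ u (r • w) w) :=
    ((hu.continuous_fderiv one_ne_zero).comp (by fun_prop)).clm_apply continuous_snd
  have hexp := eventually_norm_sub_sub_smul_le convex_univ (mem_univ R) (isCompact_sphere (0 : E) 1)
    (fun w _ r _ => (hasDerivAt_comp_smul (hu.differentiable one_ne_zero) w r).hasDerivWithinAt)
    hcont.continuousOn hκ
  rw [nhdsWithin_univ] at hexp
  filter_upwards [hexp] with r hr w hw
  have := hr w (mem_sphere_zero_iff_norm.2 hw)
  rw [hzero w hw, hg w hw, sub_zero, smul_neg, sub_neg_eq_add, smul_eq_mul, mul_comm] at this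
  exact this

theorem eventually_abs_sub_le_on_sphere {v : E → ℝ} (hv : Continuous v) (R : ℝ) {κ : ℝ}
    (hκ : 0 < κ) : ∀ᶠ r in 𝓝 R, ∀ w : E, ‖w‖ = 1 → |v (r • w) - v (R • w)| ≤ κ := by
  have hcont : Continuous (Function.uncurry fun (r : ℝ) (w : E) => v (r • w)) :=
    hv.comp (by fun_prop)
  obtain ⟨V, hV, hclose⟩ := (isCompact_sphere (0 : E) 1).mem_uniformity_of_prod
    hcont.continuousOn (mem_univ R) (dist_mem_uniformity hκ)
  rw [nhdsWithin_univ] at hV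
  filter_upwards [hV] with r hr w hw
  exact (hclose r hr w (mem_sphere_zero_iff_norm.2 hw)).le

namespace HasInitialVelocity

variable {u : ℝ → E → ℝ} {v : E → ℝ} {R g : ℝ}

theorem exists_abs_sphere_expansion_le (huv : HasInitialVelocity u v) (hv : Continuous v)
    (hu₀ : ContDiff ℝ 1 (u 0)) (hzero : ∀ w : E, ‖w‖ = 1 → u 0 (R • w) = 0)
    (hg : ∀ w : E, ‖w‖ = 1 → fderiv ℝ (u 0) (R • w) w = -g) {κ : ℝ} (hκ : 0 < κ) :
    ∃ η > 0, ∀ᶠ t in 𝓝[>] (0 : ℝ), ∀ w : E, ‖w‖ = 1 → ∀ r, |r - R| ≤ η →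
      |u t (r • w) + g * (r - R) - t * v (R • w)| ≤ κ * (t + |r - R|) := by
  obtain ⟨η, hη, hnear⟩ := Metric.nhds_basis_closedBall.eventually_iff.1
    ((eventually_abs_add_mul_sub_le hu₀ hzero hg hκ).and
      (eventually_abs_sub_le_on_sphere hv R (half_pos hκ)))
  refine ⟨η, hη, ?_⟩
  filter_upwards [huv _ (isCompact_closedBall 0 (|R| + η)) (κ / 2) (half_pos hκ),
    self_mem_nhdsWithin] with t htime ht w hw r hr
  have hmem : r • w ∈ closedBall (0 : E) (|R| + η) := by
    rw [mem_closedBall_zero_iff, norm_smul, hw, mul_one, Real.norm_eq_abs]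
    linarith [abs_sub_abs_le_abs_sub r R]
  obtain ⟨hspace, hvel⟩ := hnear (mem_closedBall.2 hr)
  calc |u t (r • w) + g * (r - R) - t * v (R • w)|
      = |(u t (r • w) - u 0 (r • w) - t * v (r • w)) + (u 0 (r • w) + g * (r - R))
          + t * (v (r • w) - v (R • w))| := by ring_nf
    _ ≤ κ / 2 * t + κ * |r - R| + t * (κ / 2) := by
        refine (abs_add_three _ _ _).trans
          (add_le_add_three (htime _ hmem) (hspace w hw) ?_)
        rw [abs_mul, abs_of_pos (mem_Ioi.1 ht)]
        exact mul_le_mul_of_nonneg_left (hvel w hw) (mem_Ioi.1 ht).le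
    _ = κ * (t + |r - R|) := by ring

end HasInitialVelocity

end Expansion

/-! ### Star-shaped regions in polar coordinates -/

section RadialSubgraph

open Module

variable {E : Type*} [NormedAddCommGroup E] [NormedSpace ℝ E]

/-- The star-shaped region `{r w : ‖w‖ = 1, 0 ≤ r < h w}` bounded by the radial graph of `h`. Only
the values of `h` on the unit sphere matter. -/
def radialSubgraph (h : E → ℝ) : Set E := {x | ∃ w : E, ‖w‖ = 1 ∧ ‖x‖ • w = x ∧ ‖x‖ < h w}

theorem radialSubgraph_subset {U : Set E} (hU : IsOpen U) (h0 : 0 ∈ U) {h : E → ℝ}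
    (hfrontier : ∀ w : E, ‖w‖ = 1 → ∀ r, 0 ≤ r → r < h w → r • w ∉ frontier U) :
    radialSubgraph h ⊆ U := by
  rintro x ⟨w, hw, hxw, hx⟩
  refine (convex_segment (0 : E) x).isPreconnected.subset_of_closure_inter_subset hU
    ⟨0, left_mem_segment ℝ 0 x, h0⟩ ?_ (right_mem_segment ℝ 0 x)
  rintro y ⟨hy_closure, hy_segment⟩
  by_contra hyU
  obtain ⟨a, ⟨ha₀, ha₁⟩, rfl⟩ := (segment_eq_image_lineMap ℝ (0 : E) x).le hy_segment
  have hray : (a * ‖x‖) • w = AffineMap.lineMap (0 : E) x a := by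
    rw [mul_smul, hxw, AffineMap.lineMap_apply_module]
    simp
  refine hfrontier w hw (a * ‖x‖) (by positivity) ?_ ?_
  · exact (mul_le_of_le_one_left (norm_nonneg x) ha₁).trans_lt hx
  · rw [hray, hU.frontier_eq]
    exact ⟨hy_closure, hyU⟩

theorem subset_radialSubgraph [Nontrivial E] {U : Set E} (hU : IsPreconnected U) (h0 : 0 ∈ U)
    {h : E → ℝ} {ρ : ℝ} (hρ : 0 ≤ ρ) (hle : ∀ w : E, ‖w‖ = 1 → h w ≤ ρ)
    (hdisj : ∀ w : E, ‖w‖ = 1 → ∀ r ∈ Icc (h w) ρ, r • w ∉ U) : U ⊆ radialSubgraph h := by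
  have hsphere : ∀ x ∈ U, ‖x‖ ≠ ρ := fun x hx hxρ => by
    obtain ⟨w, hw, hxw⟩ := exists_norm_eq_one_smul_eq x
    exact hdisj w hw ρ ⟨hle w hw, le_rfl⟩ (by rwa [← hxρ, hxw])
  intro x hx
  have hxρ : ‖x‖ < ρ := by
    by_contra! hρx
    obtain ⟨y, hyU, hy⟩ := hU.intermediate_value h0 hx continuous_norm.continuousOn
      ⟨by rwa [norm_zero], hρx⟩
    exact hsphere y hyU hy
  obtain ⟨w, hw, hxw⟩ := exists_norm_eq_one_smul_eq x
  refine ⟨w, hw, hxw, ?_⟩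
  by_contra! hhx
  exact hdisj w hw ‖x‖ ⟨hhx, hxρ.le⟩ (by rwa [hxw])

theorem radialSubgraph_const [Nontrivial E] (R : ℝ) :
    radialSubgraph (fun _ : E => R) = ball (0 : E) R := by
  ext x
  obtain ⟨w, hw, hxw⟩ := exists_norm_eq_one_smul_eq x
  rw [mem_ball_zero_iff]
  exact ⟨fun ⟨_, _, _, hx⟩ => hx, fun hx => ⟨w, hw, hxw, hx⟩⟩

theorem mem_radialSubgraph_iff {h : E → ℝ} {x : E} (hx : x ≠ 0) :
    x ∈ radialSubgraph h ↔ ‖x‖ < h (‖x‖⁻¹ • x) := by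
  constructor
  · rintro ⟨w, -, hxw, hlt⟩
    rwa [(eq_inv_smul_iff₀ (norm_ne_zero_iff.2 hx)).2 hxw] at hlt
  · exact fun hlt =>
      ⟨_, norm_smul_inv_norm hx, smul_inv_smul₀ (norm_ne_zero_iff.2 hx) x, hlt⟩

variable [FiniteDimensional ℝ E] [MeasurableSpace E] [BorelSpace E]
  (μ : Measure E) [μ.IsAddHaarMeasure]

theorem integral_unit_smul_mul_norm [Nontrivial E] (F : E → ℝ) (q : ℝ → ℝ) :
    ∫ x, F (‖x‖⁻¹ • x) * q ‖x‖ ∂μ =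
      (∫ w : sphere (0 : E) 1, F w ∂μ.toSphere) *
        ∫ r : Ioi (0 : ℝ), q r ∂Measure.volumeIoiPow (finrank ℝ E - 1) := by
  rw [← integral_prod_mul (fun w : sphere (0 : E) 1 => F w) (fun r : Ioi (0 : ℝ) => q r),
    ← μ.measurePreserving_homeomorphUnitSphereProd.integral_comp
      (Homeomorph.measurableEmbedding _),
    ← restrict_compl_singleton (μ := μ) 0,
    ← integral_subtype_comap (measurableSet_singleton _).compl
      (fun x : E => F (‖x‖⁻¹ • x) * q ‖x‖), restrict_compl_singleton]
  simp

theorem integrable_toSphere {f : sphere (0 : E) 1 → ℝ} (hf : Continuous f) :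
    Integrable f μ.toSphere :=
  hf.integrable_of_hasCompactSupport (HasCompactSupport.of_compactSpace _)

theorem measure_radialSubgraph [Nontrivial E] {h : E → ℝ}
    (hcont : Continuous fun w : sphere (0 : E) 1 => h w)
    (hpos : ∀ w : E, ‖w‖ = 1 → 0 < h w) :
    μ (radialSubgraph h) =
      ENNReal.ofReal (∫ w : sphere (0 : E) 1, h w ^ finrank ℝ E / finrank ℝ E ∂μ.toSphere) := by
  have hfinrank : finrank ℝ E - 1 + 1 = finrank ℝ E := Nat.sub_add_cancel finrank_pos
  let T : Set (sphere (0 : E) 1 × Ioi (0 : ℝ)) := {p | (p.2 : ℝ) < h p.1}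
  have hT : MeasurableSet T :=
    measurableSet_lt (measurable_subtype_coe.comp measurable_snd)
      (hcont.measurable.comp measurable_fst)
  have hpolar : μ (radialSubgraph h) =
      μ.comap ((↑) : ({0}ᶜ : Set E) → E) (homeomorphUnitSphereProd E ⁻¹' T) := by
    rw [comap_subtype_coe_apply (measurableSet_singleton _).compl,
      ← measure_sdiff_null (measure_singleton (0 : E))]
    congr 1
    ext x
    rcases eq_or_ne x 0 with rfl | hx
    · simp
    · simp [T, hx, mem_radialSubgraph_iff hx]
  have hint : Integrable (fun w : sphere (0 : E) 1 => h w ^ finrank ℝ E / finrank ℝ E)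
      μ.toSphere := integrable_toSphere μ ((hcont.pow _).div_const _)
  have hnonneg : ∀ w : sphere (0 : E) 1, 0 ≤ h w ^ finrank ℝ E / finrank ℝ E := fun w =>
    div_nonneg (pow_nonneg (hpos w (by simp)).le _) (Nat.cast_nonneg _)
  rw [hpolar, μ.measurePreserving_homeomorphUnitSphereProd.measure_preimage hT.nullMeasurableSet,
    Measure.prod_apply hT, ofReal_integral_eq_lintegral_ofReal hint (ae_of_all _ hnonneg)]
  refine lintegral_congr fun w => ?_
  have hslice : Prod.mk w ⁻¹' T = Iio (⟨h w, hpos w (by simp)⟩ : Ioi (0 : ℝ)) := by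
    ext r
    simp [T, ← Subtype.coe_lt_coe]
  rw [hslice, Measure.volumeIoiPow_apply_Iio]
  norm_cast
  simp only [hfinrank]

end RadialSubgraph

/-! ### The initial velocity of a volume preserving family has mean zero -/

section MeanZero

open Module

section Nodal

variable {E : Type*} [NormedAddCommGroup E] [NormedSpace ℝ E] [FiniteDimensional ℝ E]

theorem exists_forall_norm_eq_one_abs_le {f : E → ℝ} (hf : Continuous f) :
    ∃ M ≥ 0, ∀ w : E, ‖w‖ = 1 → |f w| ≤ M := by
  obtain ⟨M, hM⟩ := (isCompact_sphere (0 : E) 1).exists_bound_of_continuousOn hf.continuousOn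
  exact ⟨max M 0, le_max_right _ _, fun w hw =>
    (hM w (mem_sphere_zero_iff_norm.2 hw)).trans (le_max_left _ _)⟩

theorem eventually_add_mul_pos_of_norm_eq_one {b : E → ℝ} (hb : Continuous b) {R : ℝ}
    (hR : 0 < R) : ∀ᶠ t in 𝓝[>] (0 : ℝ), ∀ w : E, ‖w‖ = 1 → 0 < R + t * b w := by
  obtain ⟨M, -, hM⟩ := exists_forall_norm_eq_one_abs_le hb
  filter_upwards [eventually_mul_lt_nhdsGT_zero M hR, self_mem_nhdsWithin] with t htM ht w hw
  linarith [mul_le_mul_of_nonneg_left (abs_le.1 (hM w hw)).1 (mem_Ioi.1 ht).le]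

namespace HasInitialVelocity

variable {u : ℝ → E → ℝ} {v : E → ℝ} {R g : ℝ}

-- To first order the zero set of `u t` is the radial graph of `R + t v / g`.
theorem exists_abs_add_mul_lt (huv : HasInitialVelocity u v) (hv : Continuous v)
    (hu₀ : ContDiff ℝ 1 (u 0)) (hzero : ∀ w : E, ‖w‖ = 1 → u 0 (R • w) = 0) (hg_pos : 0 < g)
    (hg : ∀ w : E, ‖w‖ = 1 → fderiv ℝ (u 0) (R • w) w = -g) {ε : ℝ} (hε : 0 < ε) :
    ∃ η > 0, ∀ᶠ t in 𝓝[>] (0 : ℝ), ∀ w : E, ‖w‖ = 1 → ∀ r, |r - R| ≤ η →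
      t * ε ≤ |r - R - t * (v (R • w) / g)| →
      |u t (r • w) + g * (r - R - t * (v (R • w) / g))| < g * |r - R - t * (v (R • w) / g)| := by
  obtain ⟨M, hM₀, hM⟩ := exists_forall_norm_eq_one_abs_le (f := fun w : E => v (R • w) / g)
    (by fun_prop)
  let A : ℝ := (1 + M) / ε + 1
  have hA : 0 < A := by positivity
  obtain ⟨η, hη, hexp⟩ := huv.exists_abs_sphere_expansion_le hv hu₀ hzero hg
    (κ := g / (2 * A)) (by positivity)
  refine ⟨η, hη, ?_⟩
  filter_upwards [hexp, self_mem_nhdsWithin] with t ht ht₀ w hw r hr hfar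
  replace ht₀ : 0 < t := ht₀
  set b := v (R • w) / g with hb
  set d := r - R - t * b with hd
  have hd_pos : 0 < |d| := (mul_pos ht₀ hε).trans_le hfar
  have hr_le : |r - R| ≤ |d| + t * M := by
    calc |r - R| = |d + t * b| := by rw [hd]; ring_nf
      _ ≤ |d| + |t * b| := abs_add_le _ _
      _ ≤ |d| + t * M := by
        rw [abs_mul, abs_of_pos ht₀]
        gcongr
        exact hM w hw
  have ht_le : t ≤ |d| / ε := (le_div_iff₀ hε).2 hfar
  calc |u t (r • w) + g * d| = |u t (r • w) + g * (r - R) - t * v (R • w)| := by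
        rw [hd, hb]
        congr 1
        field_simp
        ring
    _ ≤ g / (2 * A) * (t + |r - R|) := ht w hw r hr
    _ ≤ g / (2 * A) * (|d| / ε * (1 + M) + |d|) := by
        refine mul_le_mul_of_nonneg_left ?_ (by positivity)
        calc t + |r - R| ≤ t * (1 + M) + |d| := by linarith
          _ ≤ |d| / ε * (1 + M) + |d| := by gcongr
    _ = g / 2 * |d| := by
        rw [show |d| / ε * (1 + M) + |d| = A * |d| by simp only [A]; ring]
        field_simp
    _ < g * |d| := by
        gcongr
        exact half_lt_self hg_pos

theorem eventually_pos_of_lt_radius (huv : HasInitialVelocity u v) (hv : Continuous v)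
    (hu₀ : ContDiff ℝ 1 (u 0)) (hpos : ∀ x ∈ ball (0 : E) R, 0 < u 0 x)
    (hzero : ∀ w : E, ‖w‖ = 1 → u 0 (R • w) = 0) (hg_pos : 0 < g)
    (hg : ∀ w : E, ‖w‖ = 1 → fderiv ℝ (u 0) (R • w) w = -g) {ε : ℝ} (hε : 0 < ε) :
    ∀ᶠ t in 𝓝[>] (0 : ℝ), ∀ w : E, ‖w‖ = 1 → ∀ r, 0 ≤ r →
      r < R + t * (v (R • w) / g - ε) → 0 < u t (r • w) := by
  obtain ⟨M, -, hM⟩ := exists_forall_norm_eq_one_abs_le (f := fun w : E => v (R • w) / g)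
    (by fun_prop)
  obtain ⟨η, hη, hsign⟩ := huv.exists_abs_add_mul_lt hv hu₀ hzero hg_pos hg hε
  have hdeep := huv.eventually_pos_of_isCompact hv hu₀.continuous
    (isCompact_closedBall (0 : E) (R - η))
    fun x hx => hpos x (closedBall_subset_ball (by linarith) hx)
  filter_upwards [hsign, hdeep, eventually_mul_lt_nhdsGT_zero M hη, self_mem_nhdsWithin]
    with t hsign hdeep htM ht w hw r hr hlt
  replace ht : 0 < t := ht
  rcases le_or_gt r (R - η) with hle | hnear
  · exact hdeep _ (mem_closedBall_zero_iff.2 ((norm_smul_of_norm_eq_one hw hr).trans_le hle))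
  have htb : t * (v (R • w) / g) ≤ t * M :=
    mul_le_mul_of_nonneg_left ((le_abs_self _).trans (hM w hw)) ht.le
  have htε := mul_pos ht hε
  have hd : r - R - t * (v (R • w) / g) ≤ -(t * ε) := by linarith
  have hd_abs := abs_of_neg (hd.trans_lt (neg_neg_of_pos htε))
  have := hsign w hw r (abs_le.2 ⟨by linarith, by linarith⟩) (by linarith)
  rw [hd_abs] at this
  linarith [(abs_lt.1 this).1]

theorem exists_eventually_neg_of_radius_le (huv : HasInitialVelocity u v) (hv : Continuous v)
    (hu₀ : ContDiff ℝ 1 (u 0)) (hzero : ∀ w : E, ‖w‖ = 1 → u 0 (R • w) = 0) (hg_pos : 0 < g)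
    (hg : ∀ w : E, ‖w‖ = 1 → fderiv ℝ (u 0) (R • w) w = -g) {ε : ℝ} (hε : 0 < ε) :
    ∃ ρ > R, ∀ᶠ t in 𝓝[>] (0 : ℝ), ∀ w : E, ‖w‖ = 1 →
      R + t * (v (R • w) / g + ε) ≤ ρ ∧
      ∀ r ∈ Icc (R + t * (v (R • w) / g + ε)) ρ, u t (r • w) < 0 := by
  obtain ⟨M, -, hM⟩ := exists_forall_norm_eq_one_abs_le (f := fun w : E => v (R • w) / g)
    (by fun_prop)
  obtain ⟨η, hη, hsign⟩ := huv.exists_abs_add_mul_lt hv hu₀ hzero hg_pos hg hε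
  refine ⟨R + η, lt_add_of_pos_right R hη, ?_⟩
  filter_upwards [hsign, eventually_mul_lt_nhdsGT_zero (M + ε) hη, self_mem_nhdsWithin]
    with t hsign htM ht w hw
  replace ht : 0 < t := ht
  have htb : |t * (v (R • w) / g)| ≤ t * M := by
    rw [abs_mul, abs_of_pos ht]
    exact mul_le_mul_of_nonneg_left (hM w hw) ht.le
  have htε := mul_pos ht hε
  refine ⟨by linarith [(abs_le.1 htb).2], fun r ⟨hr, hrρ⟩ => ?_⟩
  have hd : t * ε ≤ r - R - t * (v (R • w) / g) := by linarith
  have hd_abs := abs_of_pos (htε.trans_le hd)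
  have := hsign w hw r (abs_le.2 ⟨by linarith [(abs_le.1 htb).1], by linarith⟩) (by linarith)
  rw [hd_abs] at this
  linarith [(abs_lt.1 this).2]

end HasInitialVelocity

end Nodal

theorem hasDerivAt_integral_add_mul_pow {X : Type*} [TopologicalSpace X] [CompactSpace X]
    [MeasurableSpace X] [OpensMeasurableSpace X] (σ : Measure X) [IsFiniteMeasure σ] {b : X → ℝ}
    (hb : Continuous b) (R : ℝ) (n : ℕ) :
    HasDerivAt (fun t : ℝ => ∫ w, (R + t * b w) ^ n ∂σ) (n * R ^ (n - 1) * ∫ w, b w ∂σ) 0 := by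
  obtain ⟨M, hM⟩ := isCompact_univ.exists_bound_of_continuousOn hb.continuousOn
  have hint : Integrable (fun w => (R + 0 * b w) ^ n) σ :=
    Continuous.integrable_of_hasCompactSupport (by fun_prop) (HasCompactSupport.of_compactSpace _)
  have hderiv : ∀ w, ∀ t : ℝ, HasDerivAt (fun t : ℝ => (R + t * b w) ^ n)
      (n * (R + t * b w) ^ (n - 1) * b w) t := fun w t => by
    simpa using ((hasDerivAt_mul_const (b w)).const_add R).fun_pow n
  have hbound : ∀ w, ∀ t ∈ ball (0 : ℝ) 1,
      ‖n * (R + t * b w) ^ (n - 1) * b w‖ ≤ n * (|R| + M) ^ (n - 1) * M := fun w t ht => by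
    have hbw : |b w| ≤ M := hM w (mem_univ w)
    have hM₀ : 0 ≤ M := (abs_nonneg _).trans hbw
    have htb : |R + t * b w| ≤ |R| + M := by
      refine (abs_add_le _ _).trans ?_
      rw [abs_mul]
      gcongr
      exact (mul_le_of_le_one_left (abs_nonneg _) (mem_ball_zero_iff.1 ht).le).trans hbw
    rw [norm_mul, norm_mul, norm_pow, Real.norm_natCast, Real.norm_eq_abs, Real.norm_eq_abs]
    gcongr
  have := (hasDerivAt_integral_of_dominated_loc_of_deriv_le (ball_mem_nhds 0 one_pos)
    (Eventually.of_forall fun t => Continuous.aestronglyMeasurable (by fun_prop)) hint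
    (Continuous.aestronglyMeasurable (by fun_prop)) (ae_of_all σ hbound) (integrable_const _)
    (ae_of_all σ fun w t _ => hderiv w t)).2
  simpa [integral_const_mul] using this

section Volume

variable {E : Type*} [NormedAddCommGroup E] [NormedSpace ℝ E] [Nontrivial E]
  [FiniteDimensional ℝ E] [MeasurableSpace E] [BorelSpace E] (μ : Measure E) [μ.IsAddHaarMeasure]

theorem measure_radialSubgraph_le_iff {h k : E → ℝ}
    (hh : Continuous fun w : sphere (0 : E) 1 => h w)
    (hk : Continuous fun w : sphere (0 : E) 1 => k w)
    (hh_pos : ∀ w : E, ‖w‖ = 1 → 0 < h w) (hk_pos : ∀ w : E, ‖w‖ = 1 → 0 < k w) :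
    μ (radialSubgraph h) ≤ μ (radialSubgraph k) ↔
      ∫ w : sphere (0 : E) 1, h w ^ finrank ℝ E ∂μ.toSphere ≤
        ∫ w : sphere (0 : E) 1, k w ^ finrank ℝ E ∂μ.toSphere := by
  have hn : (0 : ℝ) < finrank ℝ E := Nat.cast_pos.2 finrank_pos
  have hk_nonneg : 0 ≤ ∫ w : sphere (0 : E) 1, k w ^ finrank ℝ E / finrank ℝ E ∂μ.toSphere :=
    integral_nonneg fun w => div_nonneg (pow_nonneg (hk_pos w (by simp)).le _) hn.le
  rw [measure_radialSubgraph μ hh hh_pos, measure_radialSubgraph μ hk hk_pos,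
    ENNReal.ofReal_le_ofReal_iff hk_nonneg, integral_div, integral_div,
    div_le_div_iff_of_pos_right hn]

theorem integral_sphere_nonneg_of_measure_ball_le {b : E → ℝ} (hb : Continuous b) {R : ℝ}
    (hR : 0 < R)
    (hle : ∀ᶠ t in 𝓝[>] (0 : ℝ), μ (ball 0 R) ≤ μ (radialSubgraph fun w => R + t * b w)) :
    0 ≤ ∫ w : sphere (0 : E) 1, b w ∂μ.toSphere := by
  have hderiv := hasDerivAt_integral_add_mul_pow μ.toSphere (hb.comp continuous_subtype_val) R
    (finrank ℝ E)
  have hnonneg := nonneg_of_hasDerivWithinAt_Ici hderiv.hasDerivWithinAt (by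
    filter_upwards [hle, eventually_add_mul_pos_of_norm_eq_one hb hR] with t ht hpos
    rw [← radialSubgraph_const, measure_radialSubgraph_le_iff μ continuous_const (by fun_prop)
      (fun _ _ => hR) hpos] at ht
    simpa using ht)
  have hcoef : (0 : ℝ) < finrank ℝ E * R ^ (finrank ℝ E - 1) :=
    mul_pos (Nat.cast_pos.2 finrank_pos) (pow_pos hR _)
  exact (mul_nonneg_iff_of_pos_left hcoef).1 hnonneg

theorem integral_sphere_nonpos_of_measure_le_ball {b : E → ℝ} (hb : Continuous b) {R : ℝ}
    (hR : 0 < R)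
    (hle : ∀ᶠ t in 𝓝[>] (0 : ℝ), μ (radialSubgraph fun w => R + t * b w) ≤ μ (ball 0 R)) :
    ∫ w : sphere (0 : E) 1, b w ∂μ.toSphere ≤ 0 := by
  have hderiv := hasDerivAt_integral_add_mul_pow μ.toSphere (hb.comp continuous_subtype_val) R
    (finrank ℝ E)
  have hnonneg := nonneg_of_hasDerivWithinAt_Ici hderiv.neg.hasDerivWithinAt (by
    filter_upwards [hle, eventually_add_mul_pos_of_norm_eq_one hb hR] with t ht hpos
    rw [← radialSubgraph_const, measure_radialSubgraph_le_iff μ (by fun_prop) continuous_const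
      hpos (fun _ _ => hR)] at ht
    simpa using ht)
  have hcoef : (0 : ℝ) < finrank ℝ E * R ^ (finrank ℝ E - 1) :=
    mul_pos (Nat.cast_pos.2 finrank_pos) (pow_pos hR _)
  rw [neg_nonneg] at hnonneg
  exact nonpos_of_mul_nonpos_right hnonneg hcoef

theorem integral_sphere_eq_zero_of_measure_sandwich {b : E → ℝ} (hb : Continuous b) {R : ℝ}
    (hR : 0 < R)
    (hinner : ∀ ε > 0, ∀ᶠ t in 𝓝[>] (0 : ℝ),
      μ (radialSubgraph fun w => R + t * (b w - ε)) ≤ μ (ball 0 R))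
    (houter : ∀ ε > 0, ∀ᶠ t in 𝓝[>] (0 : ℝ),
      μ (ball 0 R) ≤ μ (radialSubgraph fun w => R + t * (b w + ε))) :
    ∫ w : sphere (0 : E) 1, b w ∂μ.toSphere = 0 := by
  have hb_int : Integrable (fun w : sphere (0 : E) 1 => b w) μ.toSphere :=
    integrable_toSphere μ (hb.comp continuous_subtype_val)
  let m : ℝ := μ.toSphere.real univ
  have hupper : ∀ ε > 0, ∫ w : sphere (0 : E) 1, b w ∂μ.toSphere ≤ m * ε := fun ε hε => by
    have := integral_sphere_nonpos_of_measure_le_ball μ (b := fun w => b w - ε)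
      (hb.sub continuous_const) hR (hinner ε hε)
    rw [integral_sub hb_int (integrable_const ε), integral_const, smul_eq_mul] at this
    exact sub_nonpos.1 this
  have hlower : ∀ ε > 0, -(m * ε) ≤ ∫ w : sphere (0 : E) 1, b w ∂μ.toSphere := fun ε hε => by
    have := integral_sphere_nonneg_of_measure_ball_le μ (b := fun w => b w + ε)
      (hb.add continuous_const) hR (houter ε hε)
    rw [integral_add hb_int (integrable_const ε), integral_const, smul_eq_mul] at this
    exact neg_le_iff_add_nonneg.2 this
  have hlim : Tendsto (fun ε : ℝ => m * ε) (𝓝[>] 0) (𝓝 0) := by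
    simpa using ((continuous_const_mul m).tendsto 0).mono_left nhdsWithin_le_nhds
  refine le_antisymm (ge_of_tendsto hlim ?_) (le_of_tendsto (by simpa using hlim.neg) ?_)
  · exact eventually_nhdsWithin_of_forall hupper
  · exact eventually_nhdsWithin_of_forall hlower

end Volume

variable {E : Type*} [NormedAddCommGroup E] [InnerProductSpace ℝ E] [FiniteDimensional ℝ E]

/-- The data of Hadamard's variational argument at a ball of radius `R` centred at the origin: open
connected sets `Ω t` around the origin, for small `t > 0`, with positive eigenfunctions `u t` which
depart from one on the ball with initial velocity `v`. -/
structure IsEigenfunctionVariation (R : ℝ) (Ω : ℝ → Set E) (l : ℝ → ℝ) (u : ℝ → E → ℝ)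
    (v : E → ℝ) : Prop where
  radius_pos : 0 < R
  initial : IsPositiveEigenfunction (ball (0 : E) R) (l 0) (u 0)
  isOpen : ∀ᶠ t in 𝓝[>] (0 : ℝ), IsOpen (Ω t)
  isPreconnected : ∀ᶠ t in 𝓝[>] (0 : ℝ), IsPreconnected (Ω t)
  zero_mem : ∀ᶠ t in 𝓝[>] (0 : ℝ), (0 : E) ∈ Ω t
  eigenfunction : ∀ᶠ t in 𝓝[>] (0 : ℝ), IsPositiveEigenfunction (Ω t) (l t) (u t)
  continuous_velocity : Continuous v
  hasInitialVelocity : HasInitialVelocity u v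

namespace IsEigenfunctionVariation

variable {R : ℝ} {Ω : ℝ → Set E} {l : ℝ → ℝ} {u : ℝ → E → ℝ} {v : E → ℝ}

theorem initial_eq_zero (h : IsEigenfunctionVariation R Ω l u v) {w : E} (hw : ‖w‖ = 1) :
    u 0 (R • w) = 0 :=
  h.initial.eq_zero_of_mem_sphere h.radius_pos
    (mem_sphere_zero_iff_norm.2 (norm_smul_of_norm_eq_one hw h.radius_pos.le))

theorem eventually_radialSubgraph_subset (h : IsEigenfunctionVariation R Ω l u v) {b : E → ℝ}
    (hpos : ∀ᶠ t in 𝓝[>] (0 : ℝ), ∀ w : E, ‖w‖ = 1 → ∀ r, 0 ≤ r → r < R + t * b w →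
      0 < u t (r • w)) :
    ∀ᶠ t in 𝓝[>] (0 : ℝ), radialSubgraph (fun w => R + t * b w) ⊆ Ω t := by
  filter_upwards [hpos, h.isOpen, h.zero_mem, h.eigenfunction] with t hpos hopen hmem heig
  exact radialSubgraph_subset hopen hmem fun w hw r hr hlt hfrontier =>
    (hpos w hw r hr hlt).ne' (heig.eq_zero _ hfrontier)

theorem eventually_subset_radialSubgraph [Nontrivial E] (h : IsEigenfunctionVariation R Ω l u v)
    {b : E → ℝ} {ρ : ℝ} (hρ : R < ρ)
    (hneg : ∀ᶠ t in 𝓝[>] (0 : ℝ), ∀ w : E, ‖w‖ = 1 →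
      R + t * b w ≤ ρ ∧ ∀ r ∈ Icc (R + t * b w) ρ, u t (r • w) < 0) :
    ∀ᶠ t in 𝓝[>] (0 : ℝ), Ω t ⊆ radialSubgraph (fun w => R + t * b w) := by
  filter_upwards [hneg, h.isPreconnected, h.zero_mem, h.eigenfunction] with t hneg hconn hmem heig
  exact subset_radialSubgraph hconn hmem (h.radius_pos.trans hρ).le (fun w hw => (hneg w hw).1)
    fun w hw r hr hrΩ => (heig.pos _ hrΩ).not_gt ((hneg w hw).2 r hr)

theorem integral_sphere_velocity_eq_zero [Nontrivial E] [MeasurableSpace E] [BorelSpace E]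
    (μ : Measure E) [μ.IsAddHaarMeasure] (h : IsEigenfunctionVariation R Ω l u v)
    (hvol : ∀ᶠ t in 𝓝[>] (0 : ℝ), μ (Ω t) = μ (ball 0 R)) :
    ∫ w : sphere (0 : E) 1, v (R • (w : E)) ∂μ.toSphere = 0 := by
  obtain ⟨g, hg_pos, hg⟩ := h.initial.exists_fderiv_sphere_eq_neg h.radius_pos
  have hv := h.continuous_velocity
  have hu₀ := h.initial.contDiff.of_le one_le_two
  have hmean : ∫ w : sphere (0 : E) 1, v (R • (w : E)) / g ∂μ.toSphere = 0 := by
    refine integral_sphere_eq_zero_of_measure_sandwich μ (b := fun w => v (R • w) / g)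
      (by fun_prop) h.radius_pos (fun ε hε => ?_) (fun ε hε => ?_)
    · have hpos := h.hasInitialVelocity.eventually_pos_of_lt_radius hv hu₀ h.initial.pos
        (fun w => h.initial_eq_zero) hg_pos hg hε
      filter_upwards [h.eventually_radialSubgraph_subset hpos, hvol] with t hsub hvol
      exact (measure_mono hsub).trans_eq hvol
    · obtain ⟨ρ, hρ, hneg⟩ := h.hasInitialVelocity.exists_eventually_neg_of_radius_le hv hu₀
        (fun w => h.initial_eq_zero) hg_pos hg hε
      filter_upwards [h.eventually_subset_radialSubgraph hρ hneg, hvol] with t hsub hvol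
      exact hvol.ge.trans (measure_mono hsub)
  rw [integral_div] at hmean
  exact (div_eq_zero_iff.1 hmean).resolve_right hg_pos.ne'

end IsEigenfunctionVariation

end MeanZero

/-! ### Truncated eigenfunctions -/

section Truncation

open InnerProductSpace Laplacian Module
open scoped Gradient

/-- A smooth cutoff of the variable `s = ‖x‖ ^ 2` at the level `a = R ^ 2`: it is `1` where
`2 * ε ≤ a - s` and `0` where `a - s ≤ ε`. -/
noncomputable def squareCutoff (a ε s : ℝ) : ℝ := Real.smoothTransition ((a - s) / ε - 1)

section squareCutoff

variable {a ε s : ℝ}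

theorem contDiff_squareCutoff {n : ℕ∞} : ContDiff ℝ n (squareCutoff a ε) :=
  Real.smoothTransition.contDiff.comp
    (((contDiff_const.sub contDiff_id).div_const ε).sub contDiff_const)

theorem squareCutoff_eq_zero (hε : 0 < ε) (hs : a - s ≤ ε) : squareCutoff a ε s = 0 :=
  Real.smoothTransition.zero_of_nonpos (sub_nonpos.2 ((div_le_one hε).2 hs))

theorem squareCutoff_eq_one (hε : 0 < ε) (hs : 2 * ε ≤ a - s) : squareCutoff a ε s = 1 := by
  refine Real.smoothTransition.one_of_one_le ?_
  rw [le_sub_iff_add_le, one_add_one_eq_two]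
  exact (le_div_iff₀ hε).2 hs

variable (a ε s)

theorem hasDerivAt_comp_sub_div_sub_one {f : ℝ → ℝ} (hf : Differentiable ℝ f) :
    HasDerivAt (fun s => f ((a - s) / ε - 1)) (-ε⁻¹ * deriv f ((a - s) / ε - 1)) s := by
  have hinner : HasDerivAt (fun s : ℝ => (a - s) / ε - 1) (-ε⁻¹) s := by
    simpa [neg_div] using (((hasDerivAt_id s).const_sub a).div_const ε).sub_const 1
  rw [mul_comm]
  exact (hf _).hasDerivAt.comp s hinner

theorem deriv_squareCutoff :
    deriv (squareCutoff a ε) s = -ε⁻¹ * deriv Real.smoothTransition ((a - s) / ε - 1) :=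
  (hasDerivAt_comp_sub_div_sub_one a ε s
    (Real.smoothTransition.contDiff.differentiable one_ne_zero)).deriv

theorem deriv_deriv_squareCutoff :
    deriv (deriv (squareCutoff a ε)) s =
      ε⁻¹ ^ 2 * deriv (deriv Real.smoothTransition) ((a - s) / ε - 1) := by
  have hdiff : Differentiable ℝ (deriv Real.smoothTransition) :=
    (contDiff_succ_iff_deriv (n := 1).1 Real.smoothTransition.contDiff).2.2.differentiable
      one_ne_zero
  rw [funext (deriv_squareCutoff a ε),
    ((hasDerivAt_comp_sub_div_sub_one a ε s hdiff).const_mul (-ε⁻¹)).deriv]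
  ring

theorem exists_abs_deriv_smoothTransition_le :
    ∃ M : ℝ, 0 ≤ M ∧ ∀ s ∈ Icc (0 : ℝ) 1, |deriv Real.smoothTransition s| ≤ M ∧
      |deriv (deriv Real.smoothTransition) s| ≤ M := by
  have hcont : ContDiff ℝ 1 (deriv Real.smoothTransition) :=
    (contDiff_succ_iff_deriv (n := 1).1 Real.smoothTransition.contDiff).2.2
  obtain ⟨M, hM⟩ := isCompact_Icc.exists_bound_of_continuousOn (s := Icc (0 : ℝ) 1)
    hcont.continuous.continuousOn
  obtain ⟨M', hM'⟩ := isCompact_Icc.exists_bound_of_continuousOn (s := Icc (0 : ℝ) 1)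
    (hcont.continuous_deriv le_rfl).continuousOn
  have hM₀ : 0 ≤ M := (norm_nonneg _).trans (hM 0 (left_mem_Icc.2 zero_le_one))
  exact ⟨max M M', hM₀.trans (le_max_left _ _), fun s hs =>
    ⟨(hM s hs).trans (le_max_left _ _), (hM' s hs).trans (le_max_right _ _)⟩⟩

theorem exists_abs_deriv_squareCutoff_le :
    ∃ M : ℝ, 0 ≤ M ∧ ∀ a ε s : ℝ, 0 < ε → a - s ∈ Icc ε (2 * ε) →
      |deriv (squareCutoff a ε) s| ≤ M / ε ∧ |deriv (deriv (squareCutoff a ε)) s| ≤ M / ε ^ 2 := by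
  obtain ⟨M, hM₀, hM⟩ := exists_abs_deriv_smoothTransition_le
  refine ⟨M, hM₀, fun a ε s hε hs => ?_⟩
  have harg : (a - s) / ε - 1 ∈ Icc (0 : ℝ) 1 := by
    rw [mem_Icc, sub_nonneg, one_le_div hε, sub_le_iff_le_add, one_add_one_eq_two, div_le_iff₀ hε]
    exact hs
  obtain ⟨hfirst, hsecond⟩ := hM _ harg
  rw [deriv_squareCutoff, deriv_deriv_squareCutoff, abs_mul, abs_mul, abs_neg,
    abs_of_pos (inv_pos.2 hε), abs_of_pos (pow_pos (inv_pos.2 hε) 2), inv_pow, div_eq_inv_mul M,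
    div_eq_inv_mul M]
  exact ⟨by gcongr, by gcongr⟩

end squareCutoff

variable {E : Type*} [NormedAddCommGroup E]

/-- The function `u` cut off smoothly inside the ball of radius `R` about the origin. -/
noncomputable def ballTruncation (R ε : ℝ) (u : E → ℝ) (x : E) : ℝ :=
  squareCutoff (R ^ 2) ε (‖x‖ ^ 2) * u x

variable {R ε l : ℝ} {u : E → ℝ} {x y : E}

theorem ballTruncation_eq_zero (hε : 0 < ε) (hx : R ^ 2 - ‖x‖ ^ 2 ≤ ε) :
    ballTruncation R ε u x = 0 := by
  rw [ballTruncation, squareCutoff_eq_zero hε hx, zero_mul]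

theorem ballTruncation_eq_self (hε : 0 < ε) (hx : 2 * ε ≤ R ^ 2 - ‖x‖ ^ 2) :
    ballTruncation R ε u x = u x := by
  rw [ballTruncation, squareCutoff_eq_one hε hx, one_mul]

theorem mul_ballTruncation_nonneg : 0 ≤ u x * ballTruncation R ε u x := by
  rw [ballTruncation, mul_left_comm]
  exact mul_nonneg (Real.smoothTransition.nonneg _) (mul_self_nonneg _)

theorem mem_ball_zero_of_sq_sub_sq_pos (hR : 0 < R) (hx : 0 < R ^ 2 - ‖x‖ ^ 2) :
    x ∈ ball (0 : E) R :=
  mem_ball_zero_iff.2 ((sq_lt_sq₀ (norm_nonneg x) hR.le).1 (sub_pos.1 hx))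

theorem support_ballTruncation_subset (hε : 0 < ε) :
    Function.support (ballTruncation R ε u) ⊆ closedBall 0 √(R ^ 2 - ε) := by
  intro x hx
  rw [mem_closedBall_zero_iff]
  refine Real.le_sqrt_of_sq_le ?_
  by_contra! hlt
  exact hx (ballTruncation_eq_zero hε (by linarith))

variable [InnerProductSpace ℝ E]

theorem contDiff_squareCutoff_norm_sq {n : ℕ∞} :
    ContDiff ℝ n (fun x : E => squareCutoff (R ^ 2) ε (‖x‖ ^ 2)) :=
  contDiff_squareCutoff.comp (contDiff_id.norm_sq ℝ)

theorem contDiff_ballTruncation {n : ℕ∞} (hu : ContDiff ℝ n u) :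
    ContDiff ℝ n (ballTruncation R ε u) :=
  contDiff_squareCutoff_norm_sq.mul hu

variable [FiniteDimensional ℝ E]

theorem hasCompactSupport_ballTruncation (hε : 0 < ε) :
    HasCompactSupport (ballTruncation R ε u) :=
  .of_support_subset_isCompact (isCompact_closedBall _ _) (support_ballTruncation_subset hε)

/-- The failure `Δp + l p` of the truncation `p` of `u` to be an eigenfunction. -/
noncomputable def truncationDefect (R ε l : ℝ) (u : E → ℝ) (x : E) : ℝ :=
  Δ (ballTruncation R ε u) x + l * ballTruncation R ε u x

theorem continuous_truncationDefect (hu : ContDiff ℝ 2 u) :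
    Continuous (truncationDefect R ε l u) :=
  (continuous_laplacian (contDiff_ballTruncation hu)).add
    (continuous_const.mul (contDiff_ballTruncation hu).continuous)

theorem exists_abs_laplacian_squareCutoff_le (E : Type*) [NormedAddCommGroup E]
    [InnerProductSpace ℝ E] [FiniteDimensional ℝ E] (R : ℝ) :
    ∃ M : ℝ, 0 ≤ M ∧ ∀ ε : ℝ, 0 < ε → ε ≤ 1 → ∀ x : E, R ^ 2 - ‖x‖ ^ 2 ∈ Icc ε (2 * ε) →
      |Δ (fun y : E => squareCutoff (R ^ 2) ε (‖y‖ ^ 2)) x| ≤ M / ε ^ 2 := by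
  obtain ⟨M, hM₀, hM⟩ := exists_abs_deriv_squareCutoff_le
  refine ⟨4 * R ^ 2 * M + 2 * finrank ℝ E * M, by positivity, fun ε hε hε1 x hx => ?_⟩
  obtain ⟨hfirst, hsecond⟩ := hM _ ε _ hε hx
  have hlap := laplacian_comp_norm_sub_sq (contDiff_squareCutoff (a := R ^ 2) (ε := ε)) (0 : E) x
  simp only [sub_zero] at hlap
  have hnorm : ‖x‖ ^ 2 ≤ R ^ 2 := sub_nonneg.1 (hε.le.trans hx.1)
  have hfirst' : |deriv (squareCutoff (R ^ 2) ε) (‖x‖ ^ 2)| ≤ M / ε ^ 2 :=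
    hfirst.trans (div_le_div_of_nonneg_left hM₀ (by positivity)
      (pow_le_of_le_one hε.le hε1 two_ne_zero))
  rw [hlap]
  refine (abs_add_le _ _).trans ?_
  rw [abs_mul, abs_mul (2 * (finrank ℝ E : ℝ)), abs_of_nonneg (by positivity : 0 ≤ 4 * ‖x‖ ^ 2),
    abs_of_nonneg (by positivity : 0 ≤ 2 * (finrank ℝ E : ℝ))]
  calc _ ≤ 4 * R ^ 2 * (M / ε ^ 2) + 2 * finrank ℝ E * (M / ε ^ 2) := by gcongr
    _ = _ := by ring

theorem exists_norm_gradient_squareCutoff_le (hR : 0 ≤ R) :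
    ∃ M : ℝ, 0 ≤ M ∧ ∀ ε : ℝ, 0 < ε → ∀ x : E, R ^ 2 - ‖x‖ ^ 2 ∈ Icc ε (2 * ε) →
      ‖∇ (fun y : E => squareCutoff (R ^ 2) ε (‖y‖ ^ 2)) x‖ ≤ M / ε := by
  obtain ⟨M, hM₀, hM⟩ := exists_abs_deriv_squareCutoff_le
  refine ⟨2 * M * R, by positivity, fun ε hε x hx => ?_⟩
  obtain ⟨hfirst, -⟩ := hM _ ε _ hε hx
  have hgrad := gradient_comp_norm_sub_sq
    ((contDiff_squareCutoff (a := R ^ 2) (ε := ε)).differentiable one_ne_zero) (0 : E) x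
  simp only [sub_zero] at hgrad
  have hnorm : ‖x‖ ≤ R :=
    (sq_le_sq₀ (norm_nonneg x) hR).1 (sub_nonneg.1 (hε.le.trans hx.1))
  rw [hgrad, norm_smul, norm_mul, Real.norm_ofNat, Real.norm_eq_abs]
  calc 2 * |deriv (squareCutoff (R ^ 2) ε) (‖x‖ ^ 2)| * ‖x‖ ≤ 2 * (M / ε) * R := by gcongr
    _ = _ := by ring

namespace IsPositiveEigenfunction

theorem truncationDefect_eq_zero (hu : IsPositiveEigenfunction (ball (0 : E) R) l u) (hR : 0 < R)
    (hε : 0 < ε) (hx : R ^ 2 - ‖x‖ ^ 2 ∉ Icc ε (2 * ε)) : truncationDefect R ε l u x = 0 := by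
  have hcont : Continuous fun y : E => R ^ 2 - ‖y‖ ^ 2 := by fun_prop
  rw [mem_Icc, not_and_or, not_le, not_le] at hx
  rcases hx with houter | hinner
  · have hlocal : ballTruncation R ε u =ᶠ[𝓝 x] fun _ => 0 := by
      filter_upwards [hcont.continuousAt.eventually_lt_const houter] with y hy
        using ballTruncation_eq_zero hε hy.le
    rw [truncationDefect, (laplacian_congr_nhds hlocal).eq_of_nhds, hlocal.eq_of_nhds, mul_zero,
      add_zero]
    exact congrFun laplacian_const x
  · have hlocal : ballTruncation R ε u =ᶠ[𝓝 x] u := by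
      filter_upwards [hcont.continuousAt.eventually_const_lt hinner] with y hy
        using ballTruncation_eq_self hε hy.le
    have hxR : x ∈ ball (0 : E) R := mem_ball_zero_of_sq_sub_sq_pos hR (by linarith)
    rw [truncationDefect, (laplacian_congr_nhds hlocal).eq_of_nhds, hlocal.eq_of_nhds,
      hu.laplacian_eq x hxR, neg_add_cancel]

theorem truncationDefect_eq (hu : IsPositiveEigenfunction (ball (0 : E) R) l u)
    (hx : x ∈ ball (0 : E) R) :
    truncationDefect R ε l u x =
      u x * Δ (fun y : E => squareCutoff (R ^ 2) ε (‖y‖ ^ 2)) x +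
        2 * ⟪∇ (fun y : E => squareCutoff (R ^ 2) ε (‖y‖ ^ 2)) x, ∇ u x⟫ := by
  have hmul := laplacian_mul (contDiff_squareCutoff_norm_sq (R := R) (ε := ε)) hu.contDiff x
  rw [truncationDefect, show ballTruncation R ε u = fun y =>
    squareCutoff (R ^ 2) ε (‖y‖ ^ 2) * u y from rfl, hmul, hu.laplacian_eq x hx]
  ring

theorem exists_abs_truncationDefect_le [Nontrivial E]
    (hu : IsPositiveEigenfunction (ball (0 : E) R) l u) (hR : 0 < R) :
    ∃ C : ℝ, ∀ ε : ℝ, 0 < ε → ε ≤ 1 → ∀ x, |truncationDefect R ε l u x| ≤ C / ε := by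
  obtain ⟨A, hA₀, hA⟩ := exists_abs_le_mul_of_eq_zero_on_sphere hR (hu.contDiff.of_le one_le_two)
    (fun x => hu.eq_zero_of_mem_sphere hR)
  obtain ⟨D, hD⟩ := (isCompact_closedBall (0 : E) R).exists_bound_of_continuousOn
    (hu.contDiff.continuous_fderiv two_ne_zero).continuousOn
  have hD₀ : 0 ≤ D := (norm_nonneg _).trans (hD 0 (mem_closedBall_self hR.le))
  obtain ⟨L, hL₀, hL⟩ := exists_abs_laplacian_squareCutoff_le E R
  obtain ⟨G, hG₀, hG⟩ := exists_norm_gradient_squareCutoff_le (E := E) hR.le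
  refine ⟨2 * A * L + 2 * (G * D), fun ε hε hε1 x => ?_⟩
  by_cases hx : R ^ 2 - ‖x‖ ^ 2 ∈ Icc ε (2 * ε)
  swap
  · rw [hu.truncationDefect_eq_zero hR hε hx, abs_zero]
    positivity
  have hxR : x ∈ ball (0 : E) R := mem_ball_zero_of_sq_sub_sq_pos hR (hε.trans_le hx.1)
  have hux : |u x| ≤ A * (2 * ε) := (hA x hxR).trans (by gcongr; exact hx.2)
  have hgrad : ‖∇ u x‖ ≤ D := by
    rw [gradient, LinearIsometryEquiv.norm_map]
    exact hD x (ball_subset_closedBall hxR)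
  rw [hu.truncationDefect_eq hxR]
  refine (abs_add_le _ _).trans ?_
  rw [abs_mul, abs_mul, abs_of_pos (two_pos : (0 : ℝ) < 2)]
  calc _ ≤ A * (2 * ε) * (L / ε ^ 2) + 2 * (G / ε * D) := by
        gcongr
        · exact hL ε hε hε1 x hx
        · exact (abs_real_inner_le_norm _ _).trans (by gcongr; exact hG ε hε x hx)
    _ = _ := by field_simp

theorem ballTruncation_eq_of_norm_eq [Nontrivial E]
    (hu : IsPositiveEigenfunction (ball (0 : E) R) l u) (hR : 0 < R) (hε : 0 < ε)
    (hxy : ‖x‖ = ‖y‖) : ballTruncation R ε u x = ballTruncation R ε u y := by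
  rcases le_or_gt (R ^ 2 - ‖x‖ ^ 2) ε with hle | hgt
  · rw [ballTruncation_eq_zero hε hle, ballTruncation_eq_zero hε (hxy ▸ hle)]
  · have hxR : x ∈ ball (0 : E) R := mem_ball_zero_of_sq_sub_sq_pos hR (hε.trans hgt)
    rw [ballTruncation, ballTruncation, hu.eq_of_norm_eq hR hxy (ball_subset_closedBall hxR), hxy]

theorem truncationDefect_eq_of_norm_eq [Nontrivial E]
    (hu : IsPositiveEigenfunction (ball (0 : E) R) l u) (hR : 0 < R) (hε : 0 < ε)
    (hxy : ‖x‖ = ‖y‖) : truncationDefect R ε l u x = truncationDefect R ε l u y := by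
  let A := (ℝ ∙ (x - y))ᗮ.reflection
  have hinvariant : (fun z => ballTruncation R ε u (A z)) = ballTruncation R ε u :=
    funext fun z => hu.ballTruncation_eq_of_norm_eq hR hε (A.norm_map z)
  have hlap := laplacian_comp_linearIsometryEquiv
    (contDiff_ballTruncation (R := R) (ε := ε) hu.contDiff) A x
  rw [hinvariant, Submodule.reflection_sub hxy] at hlap
  rw [truncationDefect, truncationDefect, hlap, hu.ballTruncation_eq_of_norm_eq hR hε hxy]

end IsPositiveEigenfunction

end Truncation

/-! ### Radial weights concentrating on a sphere -/

section ConcentratingWeights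

open Module

variable {E : Type*} [NormedAddCommGroup E] [NormedSpace ℝ E] [FiniteDimensional ℝ E]
  [MeasurableSpace E] [BorelSpace E] (μ : Measure E) [μ.IsAddHaarMeasure]

theorem measureReal_closedBall_sdiff_ball_le {R s : ℝ} (hs : 0 ≤ s) (hsR : s < R) :
    μ.real (closedBall 0 R \ ball 0 (R - s)) ≤
      R ^ finrank ℝ E * (finrank ℝ E * (s / R)) * μ.real (ball 0 1) := by
  have hR : 0 < R := hs.trans_lt hsR
  have hsub : ball (0 : E) (R - s) ⊆ closedBall 0 R :=
    (ball_subset_ball (sub_le_self R hs)).trans ball_subset_closedBall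
  have hball : μ.real (ball 0 (R - s)) = (R - s) ^ finrank ℝ E * μ.real (ball 0 1) := by
    rw [measureReal_def, μ.addHaar_ball_of_pos 0 (sub_pos.2 hsR), ENNReal.toReal_mul,
      ENNReal.toReal_ofReal (pow_nonneg (sub_nonneg.2 hsR.le) _), measureReal_def]
  rw [measureReal_sdiff hsub measurableSet_ball measure_closedBall_lt_top.ne,
    μ.addHaar_real_closedBall 0 hR.le, hball, ← sub_mul]
  have hbernoulli := one_add_mul_le_pow (a := -(s / R))
    (by linarith [(div_le_one hR).2 hsR.le]) (finrank ℝ E)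
  have hscale : R - s = R * (1 + -(s / R)) := by field_simp; ring
  gcongr
  rw [hscale, mul_pow, sub_le_iff_le_add, ← mul_add]
  exact le_mul_of_one_le_right (by positivity) (by linarith)

variable {v q : E → ℝ} {R : ℝ}

theorem integrable_comp_unit_smul_mul (hv : Continuous v) (hq : Continuous q)
    (hsupp : HasCompactSupport q) (R : ℝ) : Integrable (fun x => v (R • ‖x‖⁻¹ • x) * q x) μ := by
  obtain ⟨M, hM⟩ := (isCompact_closedBall (0 : E) |R|).exists_bound_of_continuousOn hv.continuousOn
  refine (hq.integrable_of_hasCompactSupport hsupp).bdd_mul (c := M) ?_ (.of_forall fun x => ?_)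
  · exact (hv.measurable.comp (by fun_prop)).aestronglyMeasurable
  · refine hM _ (mem_closedBall_zero_iff.2 ?_)
    rw [norm_smul, norm_smul, norm_inv, norm_norm, Real.norm_eq_abs]
    exact mul_le_of_le_one_right (abs_nonneg R) inv_mul_le_one

variable [Nontrivial E]

theorem integral_mul_eq_integral_sub_mul_of_radial (hv : Continuous v)
    (hmean : ∫ w : sphere (0 : E) 1, v (R • (w : E)) ∂μ.toSphere = 0) (hq : Continuous q)
    (hsupp : HasCompactSupport q) (hradial : ∀ x y, ‖x‖ = ‖y‖ → q x = q y) :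
    ∫ x, v x * q x ∂μ = ∫ x, (v x - v (R • ‖x‖⁻¹ • x)) * q x ∂μ := by
  obtain ⟨w₀, hw₀⟩ := exists_norm_eq E zero_le_one
  have hpolar := integral_unit_smul_mul_norm μ (fun w => v (R • w)) (fun r => q (r • w₀))
  have hprofile (x : E) : q (‖x‖ • w₀) = q x :=
    hradial _ _ (norm_smul_of_norm_eq_one hw₀ (norm_nonneg x))
  simp only [hmean, zero_mul, hprofile] at hpolar
  have hvq : Integrable (fun x => v x * q x) μ :=
    (hv.mul hq).integrable_of_hasCompactSupport hsupp.mul_left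
  simp_rw [sub_mul]
  rw [integral_sub hvq (integrable_comp_unit_smul_mul μ hv hq hsupp R), hpolar, sub_zero]

theorem abs_integral_mul_le_of_radial {s κ B : ℝ} (hv : Continuous v)
    (hmean : ∫ w : sphere (0 : E) 1, v (R • (w : E)) ∂μ.toSphere = 0) (hq : Continuous q)
    (hradial : ∀ x y, ‖x‖ = ‖y‖ → q x = q y)
    (hsupp : ∀ x ∉ closedBall (0 : E) R \ ball 0 (R - s), q x = 0) (hbound : ∀ x, |q x| ≤ B)
    (hsR : s < R)
    (hosc : ∀ r ∈ Icc (R - s) R, ∀ w : E, ‖w‖ = 1 → |v (r • w) - v (R • w)| ≤ κ) :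
    |∫ x, v x * q x ∂μ| ≤ κ * B * μ.real (closedBall 0 R \ ball 0 (R - s)) := by
  have hcompact : HasCompactSupport q := .intro (isCompact_closedBall (0 : E) R)
    fun x hx => hsupp x fun hmem => hx hmem.1
  rw [integral_mul_eq_integral_sub_mul_of_radial μ hv hmean hq hcompact hradial,
    ← Real.norm_eq_abs, ← setIntegral_eq_integral_of_forall_compl_eq_zero
      (s := closedBall (0 : E) R \ ball 0 (R - s)) fun x hx => by rw [hsupp x hx, mul_zero]]
  refine norm_setIntegral_le_of_norm_le_const
    ((measure_mono sdiff_subset).trans_lt (measure_closedBall_lt_top (μ := μ))) fun x hx => ?_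
  have hnorm : ‖x‖ ∈ Icc (R - s) R :=
    ⟨by simpa using hx.2, mem_closedBall_zero_iff.1 hx.1⟩
  have hx₀ : x ≠ 0 := norm_pos_iff.1 ((sub_pos.2 hsR).trans_le hnorm.1)
  have hdiff := hosc ‖x‖ hnorm (‖x‖⁻¹ • x) (norm_smul_inv_norm hx₀)
  rw [smul_inv_smul₀ (norm_ne_zero_iff.2 hx₀)] at hdiff
  rw [norm_mul]
  exact mul_le_mul hdiff (hbound x) (norm_nonneg _) ((abs_nonneg _).trans hdiff)

theorem tendsto_integral_mul_of_radial {q : ℝ → E → ℝ} {A C : ℝ} (hR : 0 < R) (hA : 0 ≤ A)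
    (hv : Continuous v)
    (hmean : ∫ w : sphere (0 : E) 1, v (R • (w : E)) ∂μ.toSphere = 0)
    (hq : ∀ᶠ ε in 𝓝[>] 0, Continuous (q ε))
    (hradial : ∀ᶠ ε in 𝓝[>] 0, ∀ x y, ‖x‖ = ‖y‖ → q ε x = q ε y)
    (hsupp : ∀ᶠ ε in 𝓝[>] 0, ∀ x ∉ closedBall (0 : E) R \ ball 0 (R - ε * A), q ε x = 0)
    (hbound : ∀ᶠ ε in 𝓝[>] 0, ∀ x, |q ε x| ≤ C / ε) :
    Tendsto (fun ε => ∫ x, v x * q ε x ∂μ) (𝓝[>] 0) (𝓝 0) := by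
  set K : ℝ := R ^ finrank ℝ E * (finrank ℝ E * (A / R)) * μ.real (ball 0 1) with hK
  rw [Metric.tendsto_nhds]
  intro κ hκ
  obtain ⟨η, hη, hosc⟩ := Metric.eventually_nhds_iff_ball.1
    (eventually_abs_sub_le_on_sphere hv R (κ := κ / (|C * K| + 1)) (by positivity))
  filter_upwards [hq, hradial, hsupp, hbound, eventually_mul_lt_nhdsGT_zero A hη,
    eventually_mul_lt_nhdsGT_zero A hR, self_mem_nhdsWithin]
    with ε hq hradial hsupp hbound hεη hεR hε
  have hε : 0 < ε := hε
  have hB : 0 ≤ C / ε := (abs_nonneg _).trans (hbound 0)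
  rw [dist_zero_right, Real.norm_eq_abs]
  calc |∫ x, v x * q ε x ∂μ|
      ≤ κ / (|C * K| + 1) * (C / ε) * μ.real (closedBall 0 R \ ball 0 (R - ε * A)) := by
        refine abs_integral_mul_le_of_radial μ hv hmean hq hradial hsupp hbound hεR
          fun r hr => hosc r ?_
        rw [mem_ball, Real.dist_eq, abs_of_nonpos (sub_nonpos.2 hr.2)]
        linarith [hr.1]
    _ ≤ κ / (|C * K| + 1) * (C / ε) * (R ^ finrank ℝ E * (finrank ℝ E * (ε * A / R)) *
          μ.real (ball 0 1)) := by
        gcongr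
        exact measureReal_closedBall_sdiff_ball_le μ (by positivity) hεR
    _ = κ * (C * K / (|C * K| + 1)) := by rw [hK]; field_simp
    _ < κ * 1 := by
        gcongr
        exact (div_lt_one (by positivity)).2 ((le_abs_self _).trans_lt (lt_add_one _))
    _ = κ := mul_one κ

end ConcentratingWeights

/-! ### Differentiating the eigenvalue -/

section EigenvalueDerivative

open InnerProductSpace Laplacian

theorem HasInitialVelocity.hasDerivWithinAt_integral_mul {X : Type*} [TopologicalSpace X]
    [MeasurableSpace X] [OpensMeasurableSpace X] (μ : Measure X) [IsFiniteMeasureOnCompacts μ]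
    {u : ℝ → X → ℝ} {v f : X → ℝ} (huv : HasInitialVelocity u v) (hv : Continuous v)
    (hu₀ : Continuous (u 0)) (hu : ∀ᶠ t in 𝓝[>] 0, Continuous (u t)) (hf : Continuous f)
    (hsupp : HasCompactSupport f) :
    HasDerivWithinAt (fun t => ∫ x, u t x * f x ∂μ) (∫ x, v x * f x ∂μ) (Ici 0) 0 := by
  have hint {g : X → ℝ} (hg : Continuous g) : Integrable (fun x => g x * f x) μ :=
    (hg.mul hf).integrable_of_hasCompactSupport hsupp.mul_left
  have hf_int : Integrable (fun x => |f x|) μ := (hf.integrable_of_hasCompactSupport hsupp).abs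
  set I := ∫ x, |f x| ∂μ with hI
  have : 0 ≤ I := integral_nonneg fun x => abs_nonneg _
  rw [← hasDerivWithinAt_Ioi_iff_Ici, hasDerivWithinAt_iff_isLittleO, Asymptotics.isLittleO_iff]
  intro c hc
  filter_upwards [hu, huv _ hsupp.isCompact (c / (I + 1)) (by positivity), self_mem_nhdsWithin]
    with t hut hexp ht
  have ht : 0 < t := ht
  have hremainder : (∫ x, u t x * f x ∂μ) - (∫ x, u 0 x * f x ∂μ) - (t - 0) • ∫ x, v x * f x ∂μ =
      ∫ x, (u t x - u 0 x - t * v x) * f x ∂μ := by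
    have hdiff : Integrable (fun x => u t x * f x - u 0 x * f x) μ := (hint hut).sub (hint hu₀)
    simp_rw [sub_zero, sub_mul, mul_assoc]
    rw [integral_sub hdiff ((hint hv).const_mul t),
      integral_sub (hint hut) (hint hu₀), integral_const_mul, smul_eq_mul]
  rw [hremainder, sub_zero, Real.norm_of_nonneg ht.le]
  calc ‖∫ x, (u t x - u 0 x - t * v x) * f x ∂μ‖
      ≤ ∫ x, c / (I + 1) * t * |f x| ∂μ := by
        refine norm_integral_le_of_norm_le (hf_int.const_mul _) (.of_forall fun x => ?_)
        rw [norm_mul, Real.norm_eq_abs, Real.norm_eq_abs]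
        by_cases hx : x ∈ tsupport f
        · gcongr
          exact hexp x hx
        · simp [image_eq_zero_of_notMem_tsupport hx]
    _ = c * t * (I / (I + 1)) := by rw [integral_const_mul, ← hI]; ring
    _ ≤ c * t := mul_le_of_le_one_right (by positivity)
        ((div_le_one (by positivity)).2 (le_add_of_nonneg_right zero_le_one))

variable {E : Type*} [NormedAddCommGroup E] [InnerProductSpace ℝ E] [FiniteDimensional ℝ E]

theorem IsEigenfunctionVariation.eventually_closedBall_subset {R : ℝ} {Ω : ℝ → Set E} {l : ℝ → ℝ}
    {u : ℝ → E → ℝ} {v : E → ℝ} (h : IsEigenfunctionVariation R Ω l u v) {r : ℝ}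
    (hr : 0 ≤ r) (hrR : r < R) : ∀ᶠ t in 𝓝[>] (0 : ℝ), closedBall (0 : E) r ⊆ Ω t := by
  have hpos := h.hasInitialVelocity.eventually_pos_of_isCompact h.continuous_velocity
    h.initial.contDiff.continuous (isCompact_closedBall (0 : E) r)
    fun x hx => h.initial.pos x (closedBall_subset_ball hrR hx)
  filter_upwards [hpos, h.isOpen, h.zero_mem, h.eigenfunction] with t hpos hopen hmem heig
  refine (convex_closedBall (0 : E) r).isPreconnected.subset_of_closure_inter_subset hopen
    ⟨0, mem_closedBall_self hr, hmem⟩ ?_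
  rintro x ⟨hx_closure, hx⟩
  by_contra hxΩ
  exact (hpos x hx).ne' (heig.eq_zero x (hopen.frontier_eq.ge ⟨hx_closure, hxΩ⟩))

variable [MeasurableSpace E] [BorelSpace E] (μ : Measure E) [μ.IsAddHaarMeasure]

namespace IsPositiveEigenfunction

theorem integral_mul_laplacian_eq_neg {Ω : Set E} {l : ℝ} {u p : E → ℝ}
    (hu : IsPositiveEigenfunction Ω l u) (hp : ContDiff ℝ 2 p) (hcompact : HasCompactSupport p)
    (hsupp : Function.support p ⊆ Ω) :
    ∫ x, u x * Δ p x ∂μ = -(l * ∫ x, u x * p x ∂μ) := by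
  rw [integral_mul_laplacian_comm μ hu.contDiff hp hcompact, ← integral_const_mul, ← integral_neg]
  refine integral_congr_ae (.of_forall fun x => ?_)
  by_cases hx : p x = 0
  · simp [hx]
  · simp only [hu.laplacian_eq x (hsupp hx), neg_mul, mul_assoc]

theorem eigenvalue_eq_div {Ω : Set E} {l : ℝ} {u p : E → ℝ}
    (hu : IsPositiveEigenfunction Ω l u) (hp : ContDiff ℝ 2 p) (hcompact : HasCompactSupport p)
    (hsupp : Function.support p ⊆ Ω) (hne : ∫ x, u x * p x ∂μ ≠ 0) :
    l = -(∫ x, u x * Δ p x ∂μ) / ∫ x, u x * p x ∂μ := by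
  rw [hu.integral_mul_laplacian_eq_neg μ hp hcompact hsupp, neg_neg, mul_div_cancel_right₀ _ hne]

theorem exists_pos_le_integral_mul_ballTruncation {R l : ℝ} {u : E → ℝ}
    (hu : IsPositiveEigenfunction (ball (0 : E) R) l u) (hR : 0 < R) :
    ∃ m > 0, ∀ᶠ ε in 𝓝[>] 0, m ≤ ∫ x, u x * ballTruncation R ε u x ∂μ := by
  have hcont := hu.contDiff.continuous
  have hsub : ball (0 : E) (R / 2) ⊆ ball 0 R := ball_subset_ball (half_le_self hR.le)
  refine ⟨∫ x in ball (0 : E) (R / 2), u x * u x ∂μ, ?_, ?_⟩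
  · rw [gt_iff_lt, setIntegral_pos_iff_support_of_nonneg_ae (.of_forall fun x => mul_self_nonneg _)
      ((hcont.mul hcont).continuousOn.integrableOn_compact (isCompact_closedBall _ _)
        |>.mono_set ball_subset_closedBall)]
    refine (measure_ball_pos μ 0 (half_pos hR)).trans_le (measure_mono fun x hx => ⟨?_, hx⟩)
    exact (mul_self_pos.2 (hu.pos x (hsub hx)).ne').ne'
  · filter_upwards [eventually_mul_lt_nhdsGT_zero 2 (by nlinarith : 0 < R ^ 2 - (R / 2) ^ 2),
      self_mem_nhdsWithin] with ε hε hε₀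
    have heq : ∀ x ∈ ball (0 : E) (R / 2), u x * u x = u x * ballTruncation R ε u x :=
      fun x hx => by
        rw [ballTruncation_eq_self hε₀]
        nlinarith [norm_nonneg x, mem_ball_zero_iff.1 hx]
    rw [setIntegral_congr_fun measurableSet_ball heq]
    exact setIntegral_le_integral ((hcont.mul (contDiff_ballTruncation hu.contDiff).continuous)
      |>.integrable_of_hasCompactSupport (hasCompactSupport_ballTruncation hε₀).mul_left)
      (.of_forall fun x => mul_ballTruncation_nonneg)

end IsPositiveEigenfunction

namespace IsEigenfunctionVariation

variable {R : ℝ} {Ω : ℝ → Set E} {l : ℝ → ℝ} {u : ℝ → E → ℝ} {v : E → ℝ}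

theorem hasDerivWithinAt_eigenvalue (h : IsEigenfunctionVariation R Ω l u v) {p : E → ℝ} {r : ℝ}
    (hp : ContDiff ℝ 2 p) (hr : 0 ≤ r) (hrR : r < R)
    (hsupp : Function.support p ⊆ closedBall 0 r) (hne : ∫ x, u 0 x * p x ∂μ ≠ 0) :
    HasDerivWithinAt l (-(∫ x, v x * (Δ p x + l 0 * p x) ∂μ) / ∫ x, u 0 x * p x ∂μ)
      (Ici 0) 0 := by
  have hv := h.continuous_velocity
  have hcompact : HasCompactSupport p :=
    .of_support_subset_isCompact (isCompact_closedBall 0 r) hsupp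
  have hcompact' : HasCompactSupport (Δ p) :=
    hcompact.mono' (subset_closure.trans (tsupport_laplacian_subset p))
  have hcont : ∀ᶠ t in 𝓝[>] 0, Continuous (u t) :=
    h.eigenfunction.mono fun t ht => ht.contDiff.continuous
  have hderiv {f : E → ℝ} (hf : Continuous f) (hf_supp : HasCompactSupport f) :=
    h.hasInitialVelocity.hasDerivWithinAt_integral_mul μ hv h.initial.contDiff.continuous hcont hf
      hf_supp
  have hB := hderiv hp.continuous hcompact
  have hquot := ((hderiv (continuous_laplacian hp) hcompact').neg).fun_div hB hne
  have hsupp₀ : Function.support p ⊆ ball 0 R := hsupp.trans (closedBall_subset_ball hrR)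
  have heq : ∀ᶠ t in 𝓝[>] 0, l t = -(∫ x, u t x * Δ p x ∂μ) / ∫ x, u t x * p x ∂μ := by
    filter_upwards [h.eventually_closedBall_subset hr hrR, h.eigenfunction,
      hB.Ioi_of_Ici.continuousWithinAt.eventually_ne hne] with t hsub heig hne
    exact heig.eigenvalue_eq_div μ hp hcompact (hsupp.trans hsub) hne
  have heq₀ := h.initial.eigenvalue_eq_div μ hp hcompact hsupp₀ hne
  have hsplit : ∫ x, v x * (Δ p x + l 0 * p x) ∂μ =
      (∫ x, v x * Δ p x ∂μ) + l 0 * ∫ x, v x * p x ∂μ := by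
    have hint : Integrable (fun x => v x * Δ p x) μ :=
      (hv.mul (continuous_laplacian hp)).integrable_of_hasCompactSupport hcompact'.mul_left
    have hint' : Integrable (fun x => v x * p x) μ :=
      (hv.mul hp.continuous).integrable_of_hasCompactSupport hcompact.mul_left
    simp_rw [mul_add, mul_left_comm _ (l 0)]
    rw [integral_add hint (hint'.const_mul _), integral_const_mul]
  refine ((hquot.Ioi_of_Ici.congr_of_eventuallyEq heq heq₀).Ici_of_Ioi).congr_deriv ?_
  rw [hsplit, Pi.neg_apply, h.initial.integral_mul_laplacian_eq_neg μ hp hcompact hsupp₀]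
  field_simp
  ring

theorem tendsto_integral_mul_truncationDefect [Nontrivial E]
    (h : IsEigenfunctionVariation R Ω l u v) (hvol : ∀ᶠ t in 𝓝[>] 0, μ (Ω t) = μ (ball 0 R)) :
    Tendsto (fun ε => ∫ x, v x * truncationDefect R ε (l 0) (u 0) x ∂μ) (𝓝[>] 0) (𝓝 0) := by
  have hR := h.radius_pos
  have hu := h.initial
  obtain ⟨C, hC⟩ := hu.exists_abs_truncationDefect_le hR
  have hsmall : ∀ᶠ ε : ℝ in 𝓝[>] 0, 0 < ε ∧ ε ≤ 1 := Ioc_mem_nhdsGT one_pos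
  refine tendsto_integral_mul_of_radial μ hR (A := 2 / R) (C := C) (by positivity)
    h.continuous_velocity (h.integral_sphere_velocity_eq_zero μ hvol)
    (.of_forall fun ε => continuous_truncationDefect hu.contDiff) ?_ ?_ ?_ <;>
  filter_upwards [hsmall] with ε ⟨hε, hε1⟩
  · exact fun x y hxy => hu.truncationDefect_eq_of_norm_eq hR hε hxy
  · refine fun x hx => hu.truncationDefect_eq_zero hR hε fun hshell => hx ?_
    have hx_ball := mem_ball_zero_of_sq_sub_sq_pos hR (hε.trans_le hshell.1)
    refine ⟨ball_subset_closedBall hx_ball, fun hinner => ?_⟩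
    have hgap : R - ‖x‖ ≤ ε * (2 / R) := by
      rw [← mul_div_assoc, le_div_iff₀ hR]
      nlinarith [hshell.2, norm_nonneg x, mem_ball_zero_iff.1 hx_ball]
    linarith [mem_ball_zero_iff.1 hinner]
  · exact hC ε hε hε1

theorem hasDerivWithinAt_eigenvalue_zero [Nontrivial E] (h : IsEigenfunctionVariation R Ω l u v)
    (hvol : ∀ᶠ t in 𝓝[>] 0, μ (Ω t) = μ (ball 0 R)) : HasDerivWithinAt l 0 (Ici 0) 0 := by
  have hR := h.radius_pos
  have hu := h.initial
  obtain ⟨m, hm, hle⟩ := hu.exists_pos_le_integral_mul_ballTruncation μ hR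
  have hdefect : Tendsto (fun ε => ∫ x, v x * truncationDefect R ε (l 0) (u 0) x ∂μ)
      (𝓝[>] 0) (𝓝 0) := h.tendsto_integral_mul_truncationDefect μ hvol
  have hderiv : ∀ᶠ ε in 𝓝[>] 0, HasDerivWithinAt l
      (-(∫ x, v x * truncationDefect R ε (l 0) (u 0) x ∂μ) /
        ∫ x, u 0 x * ballTruncation R ε (u 0) x ∂μ) (Ici 0) 0 := by
    filter_upwards [hle, self_mem_nhdsWithin] with ε hle hε
    refine h.hasDerivWithinAt_eigenvalue μ (contDiff_ballTruncation hu.contDiff)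
      (Real.sqrt_nonneg _) ?_ (support_ballTruncation_subset hε) (hm.trans_le hle).ne'
    exact (Real.sqrt_lt' hR).2 (sub_lt_self _ hε)
  obtain ⟨ε, hε⟩ := hderiv.exists
  suffices hzero : derivWithin l (Ici 0) 0 = 0 from
    hε.differentiableWithinAt.hasDerivWithinAt.congr_deriv hzero
  have hbound : ∀ᶠ ε in 𝓝[>] 0, |derivWithin l (Ici 0) 0| * m ≤
      |∫ x, v x * truncationDefect R ε (l 0) (u 0) x ∂μ| := by
    filter_upwards [hderiv, hle] with ε hderiv hle
    have hI := hm.trans_le hle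
    rw [hderiv.derivWithin (uniqueDiffWithinAt_Ici 0), abs_div, abs_neg, abs_of_pos hI,
      div_mul_eq_mul_div, div_le_iff₀ hI]
    gcongr
  have hnonpos := ge_of_tendsto (by simpa using hdefect.abs) hbound
  exact abs_nonpos_iff.1 (nonpos_of_mul_nonpos_left hnonpos hm)

end IsEigenfunctionVariation

end EigenvalueDerivative

/-! ### The ball is a critical point -/

section CriticalPoint

open InnerProductSpace Laplacian

theorem ball_is_critical_point_of_first_eigenvalue_general {E : Type*} [NormedAddCommGroup E]
    [InnerProductSpace ℝ E] [FiniteDimensional ℝ E] [Nontrivial E] [MeasurableSpace E]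
    [BorelSpace E] (μ : Measure E) [μ.IsAddHaarMeasure] {Ω : ℝ → Set E} {c : E} {R δ : ℝ}
    (hR : 0 < R) (hδ : 0 < δ) (hΩ₀ : Ω 0 = ball c R) (hopen : ∀ t ∈ Ico 0 δ, IsOpen (Ω t))
    (hconn : ∀ t ∈ Ico 0 δ, IsPreconnected (Ω t)) (hcenter : ∀ᶠ t in 𝓝[>] 0, c ∈ Ω t)
    (hvol : ∀ t ∈ Ico 0 δ, μ (Ω t) = μ (ball c R)) {l : ℝ → ℝ} {u : ℝ → E → ℝ}
    (hsmooth : ContDiffOn ℝ 1 (fun p : ℝ × E => u p.1 p.2) (Ico 0 δ ×ˢ univ))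
    (heig : ∀ t ∈ Ico 0 δ, IsPositiveEigenfunction (Ω t) (l t) (u t)) :
    HasDerivWithinAt l 0 (Ici 0) 0 := by
  have hIco : ∀ᶠ t in 𝓝[>] 0, t ∈ Ico 0 δ := Ico_mem_nhdsGT hδ
  have htranslate : ContDiffOn ℝ 1 (fun p : ℝ × E => u p.1 (c + p.2)) (Ico 0 δ ×ˢ univ) :=
    hsmooth.comp (f := fun p : ℝ × E => (p.1, c + p.2)) (by fun_prop) fun p hp => ⟨hp.1, trivial⟩
  obtain ⟨v, hv, huv⟩ :=
    exists_continuous_hasInitialVelocity (u := fun t x => u t (c + x)) hδ htranslate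
  have hvariation : IsEigenfunctionVariation R (fun t => (c + ·) ⁻¹' Ω t) l
      (fun t x => u t (c + x)) v :=
    { radius_pos := hR
      initial := by simpa [hΩ₀] using (heig 0 ⟨le_rfl, hδ⟩).comp_add_left c
      isOpen := hIco.mono fun t ht => (hopen t ht).preimage (continuous_const_add c)
      isPreconnected := hIco.mono fun t ht =>
        (Homeomorph.addLeft c).isPreconnected_preimage.2 (hconn t ht)
      zero_mem := by simpa using hcenter
      eigenfunction := hIco.mono fun t ht => (heig t ht).comp_add_left c
      continuous_velocity := hv
      hasInitialVelocity := huv }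
  refine hvariation.hasDerivWithinAt_eigenvalue_zero μ (hIco.mono fun t ht => ?_)
  rw [measure_preimage_add, hvol t ht, Measure.addHaar_ball_center]

theorem contDiff_of_contDiffOn_prod_univ {𝕜 E F G : Type*} [NontriviallyNormedField 𝕜]
    [NormedAddCommGroup E] [NormedSpace 𝕜 E] [NormedAddCommGroup F] [NormedSpace 𝕜 F]
    [NormedAddCommGroup G] [NormedSpace 𝕜 G] {n : WithTop ℕ∞} {f : E → F → G} {s : Set E}
    (hf : ContDiffOn 𝕜 n (fun p : E × F => f p.1 p.2) (s ×ˢ univ)) {a : E} (ha : a ∈ s) :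
    ContDiff 𝕜 n (f a) :=
  contDiffOn_univ.1 <| hf.comp (contDiff_const.prodMk contDiff_id).contDiffOn
    fun _ _ => ⟨ha, trivial⟩

theorem lap_eq_laplacian {N : ℕ} (f : euc N → ℝ) (x : euc N) : lap N f x = Δ f x := by
  simp [lap, laplacian_eq_iteratedFDeriv_orthonormalBasis f (EuclideanSpace.basisFun (Fin N) ℝ)]

namespace SmoothlyConverges

variable {N : ℕ} {Ω : ℝ → Set (euc N)} {Ω₀ : Set (euc N)}

theorem isPreconnected (h : SmoothlyConverges N Ω Ω₀) (hΩ₀ : IsPreconnected Ω₀) :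
    ∀ t ∈ Ico 0 h.δ, IsPreconnected (Ω t) := fun t ht => by
  rw [h.image t ht]
  exact hΩ₀.image _ (h.smooth_x t ht).continuous.continuousOn

theorem mem_iff_inv_mem (h : SmoothlyConverges N Ω Ω₀) {t : ℝ} (ht : t ∈ Ico 0 h.δ) {x : euc N} :
    x ∈ Ω t ↔ h.Φinv t x ∈ Ω₀ := by
  rw [h.image t ht, image_eq_preimage_of_inverse (h.left_inv t ht) (h.right_inv t ht), mem_preimage]

theorem eventually_mem (h : SmoothlyConverges N Ω Ω₀) (hΩ₀ : IsOpen Ω₀) {x : euc N}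
    (hx : x ∈ Ω₀) : ∀ᶠ t in 𝓝[>] 0, x ∈ Ω t := by
  have hzero : 0 ∈ Ico 0 h.δ := ⟨le_rfl, h.δ_pos⟩
  have hIco : Ico 0 h.δ ∈ 𝓝[>] 0 := Ico_mem_nhdsGT h.δ_pos
  have hinv : h.Φinv 0 x ∈ Ω₀ := (h.mem_iff_inv_mem hzero).1 (h.init ▸ hx)
  have hcont : Tendsto (fun t => h.Φinv t x) (𝓝[>] 0) (𝓝 (h.Φinv 0 x)) :=
    ((h.smooth_t_inv x).continuousOn 0 hzero).tendsto.mono_left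
      (nhdsWithin_le_of_mem hIco)
  filter_upwards [hcont (hΩ₀.mem_nhds hinv), hIco] with t ht hIco
    using (h.mem_iff_inv_mem hIco).2 ht

end SmoothlyConverges

end CriticalPoint

/-- **The ball is a critical point of the first Dirichlet eigenvalue.**
Along a volume-preserving family smoothly converging to a ball, with initial velocity field
orthogonal to the boundary of the ball and jointly smooth first eigenfunctions, `λ'(0) = 0`. -/
theorem ball_is_critical_point_of_first_eigenvalue (N : ℕ) (hN : 2 ≤ N)
    (Ωf : ℝ → Set (euc N)) (c : euc N) (R : ℝ) (hR : 0 < R)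
    (h : SmoothlyConverges N Ωf (ball c R))
    (hopen : ∀ t ∈ Ico (0 : ℝ) h.δ, IsOpen (Ωf t))
    (hbdd : ∀ t ∈ Ico (0 : ℝ) h.δ, Bornology.IsBounded (Ωf t))
    -- the family is volume preserving
    (hvol : ∀ t ∈ Ico (0 : ℝ) h.δ, volume (Ωf t) = volume (ball c R))
    -- the initial velocity field is orthogonal to the boundary of the ball
    (horth : ∀ x ∈ frontier (ball c R), ∃ s : ℝ,
      derivWithin (fun τ => h.Φ τ (h.Φinv 0 x)) (Ici 0) 0 = s • (x - c))
    -- the positive normalized first eigenfunctions exist and are jointly smooth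
    (u : ℝ → euc N → ℝ)
    (husmooth : ContDiffOn ℝ (⊤ : ℕ∞) (fun p : ℝ × euc N => u p.1 p.2) (Ico (0 : ℝ) h.δ ×ˢ univ))
    (hueq : ∀ t ∈ Ico (0 : ℝ) h.δ, ∀ x ∈ Ωf t,
      -lap N (u t) x = firstEigenvalue N (Ωf t) * u t x)
    (hupos : ∀ t ∈ Ico (0 : ℝ) h.δ, ∀ x ∈ Ωf t, 0 < u t x)
    (hu0 : ∀ t ∈ Ico (0 : ℝ) h.δ, ∀ x ∈ frontier (Ωf t), u t x = 0)
    (hunorm : ∀ t ∈ Ico (0 : ℝ) h.δ, ∫ x in Ωf t, u t x ^ 2 = 1) :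
    derivWithin (fun t => firstEigenvalue N (Ωf t)) (Ici 0) 0 = 0 := by
  have : NeZero N := ⟨by omega⟩
  refine (ball_is_critical_point_of_first_eigenvalue_general volume hR h.δ_pos h.init hopen
    (h.isPreconnected (convex_ball c R).isPreconnected)
    (h.eventually_mem isOpen_ball (mem_ball_self hR)) hvol (husmooth.of_le (by simp))
    fun t ht => ?_).derivWithin (uniqueDiffWithinAt_Ici 0)
  exact
    { contDiff := contDiff_of_contDiffOn_prod_univ (husmooth.of_le (by norm_cast)) ht
      pos := hupos t ht
      eq_zero := hu0 t ht
      laplacian_eq := fun x hx => by rw [← lap_eq_laplacian, ← hueq t ht x hx, neg_neg] }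
end

section
/- Let N ≥ 2, z_N = j_{N/2−1}, and ℓ_k = k + N/2 − 1. Then the sequence ρ_k = J_{ℓ_k+1}(z_N) / J_{ℓ_k}(z_N), k ≥ 1, is positive, strictly decreasing, converges to 0 as k → ∞, and is convex for k ≥ 2 (i.e. ρ_{k+1} − 2ρ_k + ρ_{k−1} ≥ 0 for all k ≥ 3). -/
open MeasureTheory Metric Set Filter Topology
open scoped RealInnerProductSpace

/-!
Write `J_ν(x) = (x/2)^ν F_ν(x²/4)` with `F_ν` entire. Then `F_ν' = -F_{ν+1}` and
`(t^{ν+1} F_{ν+1})' = t^ν F_ν`, so positivity of `F_ν` before its first zero propagates to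
`F_{ν+1}, F_{ν+2}, …` up to and including that zero. The three-term recurrence of `J` says that the
ratios `ρ_k = J_{ν+k+1}(x) / J_{ν+k}(x)` satisfy `1/ρ_k + ρ_{k+1} = 2(ν+k+1)/x`, whose right-hand
side is increasing and affine in `k`. An increase of `ρ` at one index therefore forces an increase
at the next one, and, as `t ↦ 1/t` is convex, a failure of convexity propagates likewise. Either
would persist forever, which is incompatible with `ρ > 0` and `ρ → 0`.
-/

section InverseRecurrence

variable {R c : ℕ → ℝ}

theorem exists_succ_lt_of_tendsto_zero (hpos : ∀ k, 0 < R k) (hlim : Tendsto R atTop (𝓝 0))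
    (k : ℕ) : ∃ n ≥ k, R (n + 1) < R n := by
  by_contra! hmono
  have hge : ∀ n ≥ k, R k ≤ R n := fun n hn =>
    Nat.le_induction le_rfl (fun m hm ih => ih.trans (hmono m hm)) n hn
  exact (hpos k).not_ge (ge_of_tendsto hlim (eventually_atTop.2 ⟨k, hge⟩))

theorem strictAnti_of_inv_add_succ_eq (hpos : ∀ k, 0 < R k) (hlim : Tendsto R atTop (𝓝 0))
    (hrec : ∀ k, (R k)⁻¹ + R (k + 1) = c k) (hc : Monotone c) : StrictAnti R := by
  refine strictAnti_nat_of_succ_lt fun k => ?_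
  by_contra! hk
  have increase_persists : ∀ n ≥ k, R n ≤ R (n + 1) := by
    refine Nat.le_induction hk fun n _ ih => ?_
    have hinv : (R (n + 1))⁻¹ ≤ (R n)⁻¹ := inv_anti₀ (hpos n) ih
    linarith [hrec n, hrec (n + 1), hc n.le_succ]
  obtain ⟨n, hn, hlt⟩ := exists_succ_lt_of_tendsto_zero hpos hlim k
  exact hlt.not_ge (increase_persists n hn)

theorem two_mul_inv_lt_inv_add_inv {a b m : ℝ} (ha : 0 < a) (hb : 0 < b) (hm : a + b < 2 * m) :
    2 * m⁻¹ < a⁻¹ + b⁻¹ := by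
  have hab : 0 < a + b := add_pos ha hb
  calc 2 * m⁻¹ = 4 / (2 * m) := by ring
    _ < 4 / (a + b) := by gcongr
    _ ≤ a⁻¹ + b⁻¹ := by
      rw [div_le_iff₀ hab]
      field_simp
      nlinarith [sq_nonneg (a - b)]

theorem two_mul_succ_le_of_inv_add_succ_eq (hpos : ∀ k, 0 < R k)
    (hlim : Tendsto R atTop (𝓝 0)) (hrec : ∀ k, (R k)⁻¹ + R (k + 1) = c k)
    (hc : ∀ k, c k + c (k + 2) ≤ 2 * c (k + 1)) (k : ℕ) :
    2 * R (k + 1) ≤ R k + R (k + 2) := by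
  by_contra! hk
  have nonconvexity_persists : ∀ n ≥ k, R n + R (n + 2) < 2 * R (n + 1) := by
    refine Nat.le_induction hk fun n _ ih => ?_
    have hinv := two_mul_inv_lt_inv_add_inv (hpos n) (hpos (n + 2)) ih
    linarith [hrec n, hrec (n + 1), hrec (n + 2), hc n]
  obtain ⟨m, hm, hlt⟩ := exists_succ_lt_of_tendsto_zero hpos hlim k
  have hdiff : ∀ n ≥ m, R (n + 1) - R n ≤ R (m + 1) - R m := by
    refine Nat.le_induction le_rfl fun n hn ih => ?_
    linarith [nonconvexity_persists n (hm.trans hn)]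
  have hdiff_lim : Tendsto (fun n => R (n + 1) - R n) atTop (𝓝 0) := by
    simpa using ((tendsto_add_atTop_iff_nat 1).2 hlim).sub hlim
  linarith [le_of_tendsto hdiff_lim (eventually_atTop.2 ⟨m, hdiff⟩)]

end InverseRecurrence

/-- The `m`-th Taylor coefficient at `0` of `besselClifford ν`. `Real.Gamma` is `0` at its poles, so
division by zero gives the coefficient its correct value `0` there. -/
noncomputable def besselCliffordCoeff (ν : ℝ) (m : ℕ) : ℝ :=
  (-1) ^ m / (m.factorial * Real.Gamma (m + ν + 1))

/-- The Bessel–Clifford function, with the sign of its argument reversed: the entire function `F_ν`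
such that `J_ν(x) = (x/2)^ν F_ν(x²/4)`. -/
noncomputable def besselClifford (ν y : ℝ) : ℝ :=
  ∑' m : ℕ, besselCliffordCoeff ν m * y ^ m

theorem besselCliffordCoeff_zero (ν : ℝ) :
    besselCliffordCoeff ν 0 = (Real.Gamma (ν + 1))⁻¹ := by
  simp [besselCliffordCoeff]

theorem succ_mul_besselCliffordCoeff_succ (ν : ℝ) (m : ℕ) :
    (m + 1) * besselCliffordCoeff ν (m + 1) = -besselCliffordCoeff (ν + 1) m := by
  have harg : ((m + 1 : ℕ) : ℝ) + ν + 1 = m + (ν + 1) + 1 := by push_cast; ring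
  rw [besselCliffordCoeff, besselCliffordCoeff, harg, Nat.factorial_succ]
  push_cast
  field_simp
  ring

theorem inv_Gamma_eq_mul_inv_Gamma_add_one (s : ℝ) :
    (Real.Gamma s)⁻¹ = s * (Real.Gamma (s + 1))⁻¹ := by
  rcases eq_or_ne s 0 with rfl | hs
  · simp [Real.Gamma_zero]
  · rw [Real.Gamma_add_one hs, mul_inv, mul_inv_cancel_left₀ hs]

theorem besselCliffordCoeff_eq_mul (ν : ℝ) (m : ℕ) :
    besselCliffordCoeff ν m = (m + ν + 1) * besselCliffordCoeff (ν + 1) m := by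
  rw [besselCliffordCoeff, besselCliffordCoeff, ← add_assoc, div_eq_mul_inv, div_eq_mul_inv,
    mul_inv, mul_inv, inv_Gamma_eq_mul_inv_Gamma_add_one (m + ν + 1)]
  ring

theorem summable_besselClifford (ν y : ℝ) :
    Summable fun m : ℕ => besselCliffordCoeff ν m * y ^ m := by
  refine summable_of_ratio_norm_eventually_le (r := 1 / 2) (by norm_num) ?_
  filter_upwards [tendsto_natCast_atTop_atTop.eventually_ge_atTop (2 * |y|),
    tendsto_natCast_atTop_atTop.eventually_ge_atTop (-ν)] with m hy hν
  have hcoeff : |besselCliffordCoeff ν m|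
      = (m + 1) * (m + ν + 1) * |besselCliffordCoeff ν (m + 1)| := by
    rw [besselCliffordCoeff_eq_mul, ← neg_eq_iff_eq_neg.2 (succ_mul_besselCliffordCoeff_succ ν m),
      abs_mul, abs_neg, abs_mul, abs_of_pos (by linarith : (0 : ℝ) < m + ν + 1),
      abs_of_pos (by positivity : (0 : ℝ) < m + 1)]
    ring
  have hgrowth : 2 * |y| ≤ (m + 1) * (m + ν + 1) := by nlinarith
  calc ‖besselCliffordCoeff ν (m + 1) * y ^ (m + 1)‖
      = 1 / 2 * (2 * |y| * |besselCliffordCoeff ν (m + 1)| * |y| ^ m) := by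
        rw [Real.norm_eq_abs, abs_mul, abs_pow]; ring
    _ ≤ 1 / 2 * ((m + 1) * (m + ν + 1) * |besselCliffordCoeff ν (m + 1)| * |y| ^ m) := by gcongr
    _ = 1 / 2 * ‖besselCliffordCoeff ν m * y ^ m‖ := by
        rw [Real.norm_eq_abs, abs_mul, abs_pow, hcoeff]

theorem besselClifford_eq_zero_add (ν y : ℝ) :
    besselClifford ν y =
      besselCliffordCoeff ν 0 + ∑' m : ℕ, besselCliffordCoeff ν (m + 1) * y ^ (m + 1) := by
  simpa [besselClifford] using (summable_besselClifford ν y).tsum_eq_zero_add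

theorem besselClifford_zero (ν : ℝ) : besselClifford ν 0 = (Real.Gamma (ν + 1))⁻¹ := by
  simp [besselClifford_eq_zero_add, besselCliffordCoeff_zero]

theorem besselClifford_zero_pos {ν : ℝ} (hν : -1 < ν) : 0 < besselClifford ν 0 := by
  rw [besselClifford_zero]
  exact inv_pos.2 (Real.Gamma_pos_of_pos (by linarith))

theorem hasDerivAt_besselClifford (ν y : ℝ) :
    HasDerivAt (besselClifford ν) (-besselClifford (ν + 1) y) y := by
  have hterm : ∀ (m : ℕ) (t : ℝ),
      HasDerivAt (fun t => besselCliffordCoeff ν (m + 1) * t ^ (m + 1))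
        (-(besselCliffordCoeff (ν + 1) m * t ^ m)) t := fun m t => by
    refine ((hasDerivAt_pow (m + 1) t).const_mul _).congr_deriv ?_
    rw [← neg_mul, ← succ_mul_besselCliffordCoeff_succ]
    push_cast
    ring
  have hbound : ∀ (m : ℕ), ∀ t ∈ ball (0 : ℝ) (|y| + 1),
      ‖-(besselCliffordCoeff (ν + 1) m * t ^ m)‖
        ≤ ‖besselCliffordCoeff (ν + 1) m * (|y| + 1) ^ m‖ := fun m t ht => by
    rw [norm_neg, norm_mul, norm_mul, norm_pow, norm_pow]
    gcongr
    exact (mem_ball_zero_iff.1 ht).le.trans (le_abs_self _)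
  have hy : y ∈ ball (0 : ℝ) (|y| + 1) := by simp
  have htail := hasDerivAt_tsum_of_isPreconnected (summable_besselClifford (ν + 1) (|y| + 1)).norm
    isOpen_ball (convex_ball 0 _).isPreconnected (fun m t _ => hterm m t) hbound hy
    ((summable_nat_add_iff 1).2 (summable_besselClifford ν y)) hy
  rw [funext (besselClifford_eq_zero_add ν), besselClifford, ← tsum_neg]
  exact htail.const_add _

theorem continuous_besselClifford (ν : ℝ) : Continuous (besselClifford ν) :=
  continuous_iff_continuousAt.2 fun y => (hasDerivAt_besselClifford ν y).continuousAt

theorem besselClifford_recurrence (ν y : ℝ) :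
    besselClifford ν y = (ν + 1) * besselClifford (ν + 1) y - y * besselClifford (ν + 2) y := by
  have hsum : ∀ μ, HasSum (fun m : ℕ => besselCliffordCoeff μ m * y ^ m) (besselClifford μ y) :=
    fun μ => (summable_besselClifford μ y).hasSum
  have hweighted : HasSum (fun m : ℕ => m * (besselCliffordCoeff (ν + 1) m * y ^ m))
      (-(y * besselClifford (ν + 2) y)) := by
    rw [← hasSum_nat_add_iff' 1]
    simp only [Finset.sum_range_one, Nat.cast_zero, zero_mul, sub_zero]
    refine ((hsum (ν + 2)).mul_left y).neg.congr_fun fun m => ?_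
    have hcoeff := succ_mul_besselCliffordCoeff_succ (ν + 1) m
    rw [add_assoc, one_add_one_eq_two] at hcoeff
    push_cast
    linear_combination y ^ (m + 1) * hcoeff
  refine (hsum ν).unique ((((hsum (ν + 1)).mul_left (ν + 1)).add hweighted).congr_fun fun m => ?_)
  rw [besselCliffordCoeff_eq_mul]
  ring

theorem hasDerivAt_rpow_mul_besselClifford (ν : ℝ) {t : ℝ} (ht : t ≠ 0) :
    HasDerivAt (fun t => t ^ (ν + 1) * besselClifford (ν + 1) t)
      (t ^ ν * besselClifford ν t) t := by
  refine ((Real.hasDerivAt_rpow_const (Or.inl ht)).mul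
    (hasDerivAt_besselClifford (ν + 1) t)).congr_deriv ?_
  rw [besselClifford_recurrence ν, Real.rpow_add_one ht, add_sub_cancel_right, add_assoc,
    one_add_one_eq_two]
  ring

section Positivity

variable {ν b : ℝ}

theorem besselClifford_add_one_pos (hν : -1 < ν) (h : ∀ t ∈ Ioo 0 b, 0 < besselClifford ν t) :
    ∀ t ∈ Ioc 0 b, 0 < besselClifford (ν + 1) t := by
  rintro t ⟨ht, htb⟩
  have hν' : 0 < ν + 1 := by linarith
  have hmono : StrictMonoOn (fun t : ℝ => t ^ (ν + 1) * besselClifford (ν + 1) t) (Icc 0 b) := by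
    refine strictMonoOn_of_deriv_pos (convex_Icc 0 b)
      ((Real.continuous_rpow_const hν'.le).mul (continuous_besselClifford _)).continuousOn
      fun s hs => ?_
    rw [interior_Icc] at hs
    rw [(hasDerivAt_rpow_mul_besselClifford ν hs.1.ne').deriv]
    exact mul_pos (Real.rpow_pos_of_pos hs.1 ν) (h s hs)
  have hlt := hmono (left_mem_Icc.2 (ht.le.trans htb)) ⟨ht.le, htb⟩ ht
  simp only [Real.zero_rpow hν'.ne', zero_mul] at hlt
  exact pos_of_mul_pos_right hlt (Real.rpow_nonneg ht.le _)

theorem besselClifford_add_one_add_natCast_pos (hν : -1 < ν)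
    (h : ∀ t ∈ Ioo 0 b, 0 < besselClifford ν t) (k : ℕ) :
    ∀ t ∈ Ioc 0 b, 0 < besselClifford (ν + 1 + k) t := by
  induction k with
  | zero => simpa using besselClifford_add_one_pos hν h
  | succ k ih =>
    have hk : -1 < ν + 1 + k := by linarith [k.cast_nonneg (α := ℝ)]
    have hnext := besselClifford_add_one_pos hk fun t ht => ih t ⟨ht.1, ht.2.le⟩
    rwa [add_assoc _ (k : ℝ), ← Nat.cast_succ] at hnext

theorem le_of_besselClifford_pos (hν : -1 < ν) (h : ∀ t ∈ Ioo 0 b, 0 < besselClifford ν t) :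
    b ≤ (ν + 1) * (ν + 2) := by
  by_contra! hb
  set y := (ν + 1) * (ν + 2) with hy
  have hν' : 0 < ν + 1 := by linarith
  have hy0 : 0 < y := mul_pos hν' (by linarith)
  have hpos : ∀ k : ℕ, 0 < besselClifford (ν + 1 + k) y := fun k =>
    besselClifford_add_one_add_natCast_pos hν h k y ⟨hy0, hb.le⟩
  have h₀ : 0 < besselClifford ν y := h y ⟨hy0, hb⟩
  have h₃ : 0 < besselClifford (ν + 1 + 2) y := mod_cast hpos 2
  have h₁₂ : besselClifford (ν + 1) y < (ν + 2) * besselClifford (ν + 2) y := by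
    have hrec := besselClifford_recurrence (ν + 1) y
    rw [show ν + 1 + 1 = ν + 2 by ring] at hrec
    linarith [mul_pos hy0 h₃]
  have h₀₁ := besselClifford_recurrence ν y
  have hscaled := mul_lt_mul_of_pos_left h₁₂ hν'
  rw [← mul_assoc, ← hy] at hscaled
  linarith

theorem besselClifford_pos_of_ne_zero (hν : -1 < ν) (h : ∀ t ∈ Ioo 0 b, besselClifford ν t ≠ 0) :
    ∀ t ∈ Ioo 0 b, 0 < besselClifford ν t := by
  rintro t ⟨ht, htb⟩
  by_contra! hneg
  have h0 := besselClifford_zero_pos hν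
  obtain ⟨s, ⟨hs, hst⟩, hzero⟩ := intermediate_value_Icc' ht.le
    (continuous_besselClifford ν).continuousOn ⟨hneg, h0.le⟩
  have hs0 : s ≠ 0 := by
    rintro rfl
    exact h0.ne' hzero
  exact h s ⟨lt_of_le_of_ne' hs hs0, hst.trans_lt htb⟩ hzero

theorem exists_pos_besselClifford_eq_zero (hν : -1 < ν) : ∃ y > 0, besselClifford ν y = 0 := by
  by_contra! hne
  have hle := le_of_besselClifford_pos (b := (ν + 1) * (ν + 2) + 1) hν
    (besselClifford_pos_of_ne_zero hν fun t ht => hne t ht.1)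
  linarith

end Positivity

theorem abs_besselClifford_le {ν : ℝ} (hν : 1 ≤ ν) (y : ℝ) :
    |besselClifford ν y| ≤ Real.exp |y| / Real.Gamma (ν + 1) := by
  have hΓ : 0 < Real.Gamma (ν + 1) := Real.Gamma_pos_of_pos (by linarith)
  have hexp : HasSum (fun m : ℕ => |y| ^ m / m.factorial / Real.Gamma (ν + 1))
      (Real.exp |y| / Real.Gamma (ν + 1)) := by
    rw [Real.exp_eq_exp_ℝ]
    exact (NormedSpace.expSeries_div_hasSum_exp |y|).div_const _
  rw [← Real.norm_eq_abs, besselClifford]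
  refine tsum_of_norm_bounded hexp fun m => ?_
  have hΓm : Real.Gamma (ν + 1) ≤ Real.Gamma (m + ν + 1) :=
    Real.Gamma_strictMonoOn_Ici.monotoneOn (mem_Ici.2 (by linarith)) (mem_Ici.2 (by linarith))
      (by linarith)
  calc ‖besselCliffordCoeff ν m * y ^ m‖
      = |y| ^ m / m.factorial / Real.Gamma (m + ν + 1) := by
        rw [besselCliffordCoeff, norm_mul, norm_div, norm_mul, norm_pow, norm_pow, norm_neg,
          norm_one, one_pow, Real.norm_of_nonneg (hΓ.le.trans hΓm), Real.norm_natCast,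
          Real.norm_eq_abs]
        ring
    _ ≤ |y| ^ m / m.factorial / Real.Gamma (ν + 1) := by gcongr

theorem abs_Gamma_mul_besselClifford_sub_one_le {ν : ℝ} (hν : 1 ≤ ν) (y : ℝ) :
    |Real.Gamma (ν + 1) * besselClifford ν y - 1| ≤ |y| * Real.exp |y| / (ν + 1) := by
  have hΓ : 0 < Real.Gamma (ν + 1) := Real.Gamma_pos_of_pos (by linarith)
  have hΓ' : Real.Gamma (ν + 1 + 1) = (ν + 1) * Real.Gamma (ν + 1) :=
    Real.Gamma_add_one (by linarith)
  have hderiv : ∀ t ∈ closedBall (0 : ℝ) |y|,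
      ‖-besselClifford (ν + 1) t‖ ≤ Real.exp |y| / ((ν + 1) * Real.Gamma (ν + 1)) := fun t ht => by
    have hty : |t| ≤ |y| := mem_closedBall_zero_iff.1 ht
    rw [norm_neg, ← hΓ']
    exact (abs_besselClifford_le (by linarith) t).trans (by rw [hΓ']; gcongr)
  have hmean : |besselClifford ν y - besselClifford ν 0| ≤
      Real.exp |y| / ((ν + 1) * Real.Gamma (ν + 1)) * |y - 0| :=
    (convex_closedBall (0 : ℝ) |y|).norm_image_sub_le_of_norm_hasDerivWithin_le
      (fun t _ => (hasDerivAt_besselClifford ν t).hasDerivWithinAt) hderiv (by simp) (by simp)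
  calc |Real.Gamma (ν + 1) * besselClifford ν y - 1|
      = Real.Gamma (ν + 1) * |besselClifford ν y - besselClifford ν 0| := by
        rw [besselClifford_zero, ← abs_of_pos hΓ, ← abs_mul, abs_of_pos hΓ, mul_sub,
          mul_inv_cancel₀ hΓ.ne']
    _ ≤ Real.Gamma (ν + 1) * (Real.exp |y| / ((ν + 1) * Real.Gamma (ν + 1)) * |y - 0|) := by gcongr
    _ = |y| * Real.exp |y| / (ν + 1) := by rw [sub_zero]; field_simp

theorem tendsto_Gamma_mul_besselClifford_atTop (y : ℝ) :
    Tendsto (fun ν => Real.Gamma (ν + 1) * besselClifford ν y) atTop (𝓝 1) := by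
  rw [tendsto_iff_norm_sub_tendsto_zero]
  refine squeeze_zero' (Eventually.of_forall fun _ => norm_nonneg _)
    ((eventually_ge_atTop 1).mono fun ν hν => abs_Gamma_mul_besselClifford_sub_one_le hν y) ?_
  exact (tendsto_atTop_add_const_right atTop 1 tendsto_id).const_div_atTop _

theorem besselJ_eq_rpow_mul_besselClifford (ν : ℝ) {x : ℝ} (hx : 0 < x) :
    besselJ ν x = (x / 2) ^ ν * besselClifford ν ((x / 2) ^ 2) := by
  rw [besselJ, besselClifford, ← tsum_mul_left]
  refine tsum_congr fun m => ?_
  have hpow : (x / 2) ^ (2 * (m : ℝ) + ν) = (x / 2) ^ ν * ((x / 2) ^ 2) ^ m := by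
    rw [Real.rpow_add (by positivity), ← pow_mul, ← Real.rpow_natCast, mul_comm]
    norm_cast
  rw [hpow, besselCliffordCoeff]
  ring

theorem besselJ_eq_zero_iff {ν x : ℝ} (hx : 0 < x) :
    besselJ ν x = 0 ↔ besselClifford ν ((x / 2) ^ 2) = 0 := by
  have hpow : (x / 2) ^ ν ≠ 0 := (Real.rpow_pos_of_pos (half_pos hx) ν).ne'
  rw [besselJ_eq_rpow_mul_besselClifford ν hx, mul_eq_zero, or_iff_right hpow]

theorem besselJ_recurrence (ν : ℝ) {x : ℝ} (hx : 0 < x) :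
    besselJ ν x + besselJ (ν + 2) x = 2 * (ν + 1) / x * besselJ (ν + 1) x := by
  have hx2 : x / 2 ≠ 0 := (half_pos hx).ne'
  have hpow : (x / 2) ^ (ν + 2) = (x / 2) ^ ν * (x / 2) ^ 2 :=
    mod_cast Real.rpow_add_natCast hx2 ν 2
  simp only [besselJ_eq_rpow_mul_besselClifford _ hx, besselClifford_recurrence ν, hpow,
    Real.rpow_add_one hx2]
  field_simp
  ring

section FirstZero

variable {ν x : ℝ}

theorem exists_pos_besselJ_eq_zero (hν : -1 < ν) : ∃ x > 0, besselJ ν x = 0 := by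
  obtain ⟨y, hy, hzero⟩ := exists_pos_besselClifford_eq_zero hν
  have hx : 0 < 2 * √y := by positivity
  refine ⟨2 * √y, hx, (besselJ_eq_zero_iff hx).2 ?_⟩
  rwa [mul_div_cancel_left₀ _ two_ne_zero, Real.sq_sqrt hy.le]

theorem besselJzero_le (hx : 0 < x) (hzero : besselJ ν x = 0) : besselJzero ν ≤ x :=
  csInf_le ⟨0, fun _ h => h.1.le⟩ ⟨hx, hzero⟩

theorem besselJzero_pos (hν : -1 < ν) : 0 < besselJzero ν := by
  have hcont : Continuous fun x : ℝ => besselClifford ν ((x / 2) ^ 2) :=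
    (continuous_besselClifford ν).comp (by fun_prop)
  have hnear : ∀ᶠ x in 𝓝 (0 : ℝ), 0 < besselClifford ν ((x / 2) ^ 2) :=
    hcont.continuousAt.eventually_const_lt (by simpa using besselClifford_zero_pos hν)
  obtain ⟨ε, hε, hball⟩ := Metric.eventually_nhds_iff.1 hnear
  refine hε.trans_le (le_csInf (exists_pos_besselJ_eq_zero hν) ?_)
  rintro x ⟨hx, hzero⟩
  by_contra! hxε
  have hpos := hball (y := x) (by simpa [abs_of_pos hx] using hxε)
  exact hpos.ne' ((besselJ_eq_zero_iff hx).1 hzero)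

theorem besselClifford_pos_of_le_besselJzero (hν : -1 < ν) (hx : 0 < x) (hxz : x ≤ besselJzero ν) :
    ∀ t ∈ Ioo 0 ((x / 2) ^ 2), 0 < besselClifford ν t := by
  refine besselClifford_pos_of_ne_zero hν ?_
  rintro t ⟨ht, htx⟩ hzero
  have hs : 0 < 2 * √t := by positivity
  have hzero' : besselJ ν (2 * √t) = 0 := by
    rwa [besselJ_eq_zero_iff hs, mul_div_cancel_left₀ _ two_ne_zero, Real.sq_sqrt ht.le]
  have hsqrt : √t < x / 2 := (Real.sqrt_lt' (half_pos hx)).2 htx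
  linarith [besselJzero_le hs hzero']

theorem besselJ_add_one_add_natCast_pos (hν : -1 < ν) (hx : 0 < x) (hxz : x ≤ besselJzero ν)
    (k : ℕ) : 0 < besselJ (ν + 1 + k) x := by
  rw [besselJ_eq_rpow_mul_besselClifford _ hx]
  exact mul_pos (Real.rpow_pos_of_pos (half_pos hx) _)
    (besselClifford_add_one_add_natCast_pos hν (besselClifford_pos_of_le_besselJzero hν hx hxz) k _
      ⟨by positivity, le_rfl⟩)

end FirstZero

/-- The ratio `J_{ν+1}(x) / J_ν(x)` of Bessel functions of consecutive orders; the `ρ_k` of the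
theorem is `besselRatio (k + N / 2 - 1) z_N`. -/
noncomputable def besselRatio (ν x : ℝ) : ℝ := besselJ (ν + 1) x / besselJ ν x

section Ratio

variable {ν x : ℝ}

theorem inv_besselRatio_add_besselRatio_add_one (hx : 0 < x) (hJ : besselJ (ν + 1) x ≠ 0) :
    (besselRatio ν x)⁻¹ + besselRatio (ν + 1) x = 2 * (ν + 1) / x := by
  rw [besselRatio, besselRatio, inv_div, ← add_div, add_assoc, one_add_one_eq_two,
    besselJ_recurrence ν hx, mul_div_cancel_right₀ _ hJ]

theorem besselRatio_eq_besselClifford_div (ν : ℝ) (hx : 0 < x) :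
    besselRatio ν x =
      x / 2 * (besselClifford (ν + 1) ((x / 2) ^ 2) / besselClifford ν ((x / 2) ^ 2)) := by
  have hpow : (x / 2) ^ ν ≠ 0 := (Real.rpow_pos_of_pos (half_pos hx) ν).ne'
  rw [besselRatio, besselJ_eq_rpow_mul_besselClifford _ hx, besselJ_eq_rpow_mul_besselClifford _ hx,
    Real.rpow_add_one (half_pos hx).ne', mul_assoc, mul_div_mul_left _ _ hpow, mul_div_assoc]

theorem tendsto_besselRatio_atTop (hx : 0 < x) :
    Tendsto (fun ν => besselRatio ν x) atTop (𝓝 0) := by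
  have hnorm := tendsto_Gamma_mul_besselClifford_atTop ((x / 2) ^ 2)
  have hshift : Tendsto (fun ν : ℝ => ν + 1) atTop atTop :=
    tendsto_atTop_add_const_right atTop 1 tendsto_id
  have hlim := (hshift.const_div_atTop (x / 2)).mul ((hnorm.comp hshift).div hnorm one_ne_zero)
  rw [zero_mul] at hlim
  refine hlim.congr' ?_
  filter_upwards [eventually_gt_atTop (-1)] with ν hν
  have hν' : ν + 1 ≠ 0 := by linarith
  have hΓ : Real.Gamma (ν + 1) ≠ 0 := (Real.Gamma_pos_of_pos (by linarith)).ne'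
  simp only [Function.comp_apply, Pi.div_apply]
  rw [besselRatio_eq_besselClifford_div ν hx, Real.Gamma_add_one hν']
  field_simp

theorem tendsto_besselRatio_add_natCast (ν : ℝ) (hx : 0 < x) :
    Tendsto (fun k : ℕ => besselRatio (ν + k) x) atTop (𝓝 0) :=
  (tendsto_besselRatio_atTop hx).comp
    (tendsto_atTop_add_const_left atTop ν tendsto_natCast_atTop_atTop)

theorem besselRatio_add_natCast_pos (hJ : ∀ k : ℕ, 0 < besselJ (ν + k) x) (k : ℕ) :
    0 < besselRatio (ν + k) x := by
  refine div_pos ?_ (hJ k)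
  simpa [add_assoc] using hJ (k + 1)

theorem inv_besselRatio_add_natCast_add_succ (hx : 0 < x) (hJ : ∀ k : ℕ, 0 < besselJ (ν + k) x)
    (k : ℕ) :
    (besselRatio (ν + k) x)⁻¹ + besselRatio (ν + (k + 1 : ℕ)) x = 2 * (ν + k + 1) / x := by
  have hJ' := (hJ (k + 1)).ne'
  rw [Nat.cast_succ, ← add_assoc] at hJ' ⊢
  exact inv_besselRatio_add_besselRatio_add_one hx hJ'

theorem strictAnti_besselRatio_add_natCast (hx : 0 < x) (hJ : ∀ k : ℕ, 0 < besselJ (ν + k) x) :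
    StrictAnti fun k : ℕ => besselRatio (ν + k) x := by
  refine strictAnti_of_inv_add_succ_eq (besselRatio_add_natCast_pos hJ)
    (tendsto_besselRatio_add_natCast ν hx) (inv_besselRatio_add_natCast_add_succ hx hJ)
    fun i j hij => ?_
  gcongr

theorem two_mul_besselRatio_add_natCast_succ_le (hx : 0 < x)
    (hJ : ∀ k : ℕ, 0 < besselJ (ν + k) x) (k : ℕ) :
    2 * besselRatio (ν + (k + 1 : ℕ)) x ≤
      besselRatio (ν + k) x + besselRatio (ν + (k + 2 : ℕ)) x := by
  refine two_mul_succ_le_of_inv_add_succ_eq (besselRatio_add_natCast_pos hJ)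
    (tendsto_besselRatio_add_natCast ν hx) (inv_besselRatio_add_natCast_add_succ hx hJ)
    (fun k => le_of_eq ?_) k
  push_cast
  ring

end Ratio

theorem bessel_ratio_sequence_properties_general {s x : ℝ} (hs : 0 < s) (hx : 0 < x)
    (hxs : x ≤ besselJzero (s - 1)) :
    (∀ k : ℕ, 1 ≤ k → 0 < besselJ (k + s) x / besselJ (k + s - 1) x) ∧
    (∀ k : ℕ, 1 ≤ k →
      besselJ ((k + 1) + s) x / besselJ ((k + 1) + s - 1) x <
        besselJ (k + s) x / besselJ (k + s - 1) x) ∧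
    Tendsto (fun k : ℕ => besselJ (k + s) x / besselJ (k + s - 1) x) atTop (𝓝 0) ∧
    (∀ k : ℕ, 2 ≤ k →
      0 ≤ besselJ ((k + 1) + s) x / besselJ ((k + 1) + s - 1) x -
          2 * (besselJ (k + s) x / besselJ (k + s - 1) x) +
          besselJ ((k - 1) + s) x / besselJ ((k - 1) + s - 1) x) := by
  have hJ : ∀ k : ℕ, 0 < besselJ (s + k) x := by
    simpa using besselJ_add_one_add_natCast_pos (ν := s - 1) (by linarith) hx hxs
  have hratio : ∀ (n : ℕ) (μ : ℝ), μ = s + n + 1 →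
      besselJ μ x / besselJ (μ - 1) x = besselRatio (s + n) x := by
    rintro n μ rfl
    rw [besselRatio, add_sub_cancel_right]
  refine ⟨fun k hk => ?_, fun k hk => ?_, ?_, fun k hk => ?_⟩
  · obtain ⟨n, rfl⟩ := Nat.exists_eq_add_of_le' hk
    rw [hratio n _ (by push_cast; ring)]
    exact besselRatio_add_natCast_pos hJ n
  · obtain ⟨n, rfl⟩ := Nat.exists_eq_add_of_le' hk
    rw [hratio (n + 1) (_ + 1 + s) (by push_cast; ring), hratio n _ (by push_cast; ring)]
    exact strictAnti_besselRatio_add_natCast hx hJ n.lt_succ_self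
  · rw [← tendsto_add_atTop_iff_nat 1]
    refine (tendsto_besselRatio_add_natCast s hx).congr fun n => ?_
    rw [hratio n _ (by push_cast; ring)]
  · obtain ⟨n, rfl⟩ := Nat.exists_eq_add_of_le' hk
    rw [hratio (n + 2) (_ + 1 + s) (by push_cast; ring),
      hratio (n + 1) (_ + s) (by push_cast; ring), hratio n _ (by push_cast; ring)]
    linarith [two_mul_besselRatio_add_natCast_succ_le hx hJ n]

/-- **Properties of the Bessel ratio sequence (Lemma 2.3, first part).**
With `z_N = j_{N/2-1}` and `ℓ_k = k + N/2 - 1`, the sequence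
`ρ_k = J_{ℓ_k+1}(z_N)/J_{ℓ_k}(z_N)` (`k ≥ 1`) is positive, strictly decreasing, vanishing at
infinity, and convex for `k ≥ 2`. -/
theorem bessel_ratio_sequence_properties (N : ℕ) (hN : 2 ≤ N) :
    (∀ k : ℕ, 1 ≤ k →
      0 < besselJ ((k : ℝ) + N / 2) (besselJzero ((N : ℝ) / 2 - 1)) /
          besselJ ((k : ℝ) + N / 2 - 1) (besselJzero ((N : ℝ) / 2 - 1))) ∧
    (∀ k : ℕ, 1 ≤ k →
      besselJ (((k : ℝ) + 1) + N / 2) (besselJzero ((N : ℝ) / 2 - 1)) /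
          besselJ (((k : ℝ) + 1) + N / 2 - 1) (besselJzero ((N : ℝ) / 2 - 1)) <
        besselJ ((k : ℝ) + N / 2) (besselJzero ((N : ℝ) / 2 - 1)) /
          besselJ ((k : ℝ) + N / 2 - 1) (besselJzero ((N : ℝ) / 2 - 1))) ∧
    Tendsto (fun k : ℕ =>
      besselJ ((k : ℝ) + N / 2) (besselJzero ((N : ℝ) / 2 - 1)) /
        besselJ ((k : ℝ) + N / 2 - 1) (besselJzero ((N : ℝ) / 2 - 1)))
      atTop (𝓝 0) ∧
    (∀ k : ℕ, 3 ≤ k →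
      0 ≤ besselJ (((k : ℝ) + 1) + N / 2) (besselJzero ((N : ℝ) / 2 - 1)) /
            besselJ (((k : ℝ) + 1) + N / 2 - 1) (besselJzero ((N : ℝ) / 2 - 1)) -
          2 * (besselJ ((k : ℝ) + N / 2) (besselJzero ((N : ℝ) / 2 - 1)) /
            besselJ ((k : ℝ) + N / 2 - 1) (besselJzero ((N : ℝ) / 2 - 1))) +
          besselJ (((k : ℝ) - 1) + N / 2) (besselJzero ((N : ℝ) / 2 - 1)) /
            besselJ (((k : ℝ) - 1) + N / 2 - 1) (besselJzero ((N : ℝ) / 2 - 1))) := by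
  have hν : (-1 : ℝ) < N / 2 - 1 := by linarith [show (2 : ℝ) ≤ N from mod_cast hN]
  obtain ⟨hpos, hanti, hlim, hconvex⟩ := bessel_ratio_sequence_properties_general
    (s := N / 2) (by linarith) (besselJzero_pos hν) le_rfl
  exact ⟨hpos, hanti, hlim, fun k hk => hconvex k (by lia)⟩
end
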